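/- Let f : ℝ → ℝ be smooth and 1-periodic with f(0) = f'(0) = 0, f increasing on [0,1/2] with f(1/2) = 1, and f decreasing on [1/2,1]. Let H(x,y) = f(x) on ℝ² with its standard area form dx∧dy; its Hamiltonian flow is φ_t(x,y) = (x, y + t f'(x)). Then for every T > 0 the following holds: for every smooth K : [0,1]×ℝ² → ℝ which is ℤ²-periodic in the space variable (K_t(z+k) = K_t(z) for all k ∈ ℤ²) and whose generated Hamiltonian isotopy ψ_t (ψ_0 = id, (d/dt)ψ_t = X_{K_t}∘ψ_t) satisfies ψ_1(z) = φ_T(z) + c for all z and some fixed c ∈ ℤ², one has ∫₀¹ (sup K_t − inf K_t) dt ≥ T. (Hence, on the torus T² = ℝ²/ℤ², the Hofer length of any Hamiltonian path from the identity to the time-T map of H is at least T = T·TotVar(H), so the flow of H is length-minimizing for all time and the Hofer norm on Ham(T²) is unbounded.) -/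

import Mathlib

/-!
The line `y = 0` is followed along the isotopy. Let `A s` be the action `∫₀¹ (K + y x') dt` of the
orbit that starts at `(s, 0)`. Since `ψ 1` moves the first coordinate by a constant, the first
variation formula (`hasDerivAt_action`) gives `A' s = y(1) = T f' s + c.2`, hence
`A (1/2) - A 0 = T + c.2 / 2` and `A (-1/2) - A 0 = T - c.2 / 2`, the latter by periodicity of `f`.
The mean of these two differences is `T`, so it remains to see that every action lies between
`∫ min K_t dt` and `∫ max K_t dt` (`le_action`, `action_le`, combined in `action_sub_le`).

That estimate is a minimax argument. The orbit starting at `(s, 0)` is the only one that goes from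
the line `y = 0` to the line `x = s + c.1`. The flow is replaced by its symplectic Euler scheme
with `N` steps, for which such chords are the critical points of `∑ wᵢ yᵢ + g(w, y)` on `ℝᴺ × ℝᴺ`,
where the wᵢ are the increments of `x`, the yᵢ the successive values of `y`, and the function
`g = h ∑ Kᵢ` (with `h = 1 / N`) is bounded by `h ∑ max Kᵢ`. The sum has a critical value at most
`sup g` (`exists_critical_le`): otherwise a gradient descent would push the antidiagonal
`{(v, -v)}`, where the quadratic form is nonpositive, below every level. By Brouwer's theorem
(`exists_fixed_point`) its image still meets the diagonal `{(v, v)}`, where the quadratic form is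
nonnegative and the sum is therefore at least `inf g`, a contradiction. Thus
`discrete_chord_le` produces, for each `N`, a discrete chord of action at most `h ∑ max Kᵢ`, and
`discrete_error`, together with continuity of `A`, passes to the limit. The lower bound is the
mirror image under `(x, y, K) ↦ (x, -y, -K)`.

Brouwer's theorem itself is proved by the change of variables formula: for a Lipschitz map `p`
supported in a ball, the integral of `det (1 + s Dp)` over the ball is a polynomial in `s`,
equal to the volume of the ball for small `s`, hence also at `s = 1` (`exists_det_ne_zero`), so the
Jacobian of `1 + p` does not vanish identically, as it would for a retraction onto the sphere.
-/

open Set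

noncomputable section

/-- The Hamiltonian vector field `X_K = J∇K = (-∂K/∂y, ∂K/∂x)` on `ℝ²` with its
standard area form `dx ∧ dy`. -/
def hamVF2 (K : ℝ × ℝ → ℝ) (p : ℝ × ℝ) : ℝ × ℝ :=
  (- (fderiv ℝ K p) (0, 1), (fderiv ℝ K p) (1, 0))

/-! ### Brouwer's fixed point theorem -/

section Brouwer

open MeasureTheory

variable {E : Type*} [NormedAddCommGroup E] [InnerProductSpace ℝ E] [FiniteDimensional ℝ E]

/-- Along an affine pencil `1 + s A` the determinant is a polynomial in `s` of degree at most
`dim E`, so its value at `s = 1` is given by Lagrange interpolation at `dim E + 1` nodes. -/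
lemma det_one_add_interp (A : E →L[ℝ] E) (s : ℕ → ℝ)
    (hs : Set.InjOn s (Finset.range (Module.finrank ℝ E + 1) : Finset ℕ)) :
    (1 + A).det = ∑ j ∈ Finset.range (Module.finrank ℝ E + 1),
      (Lagrange.basis (Finset.range (Module.finrank ℝ E + 1)) s j).eval 1 * (1 + s j • A).det := by
  classical
  set n := Module.finrank ℝ E with hn
  let b := Module.finBasis ℝ E
  set M : Matrix (Fin n) (Fin n) ℝ := LinearMap.toMatrix b b (A : E →ₗ[ℝ] E) with hM
  let P : Polynomial ℝ :=
    ((Polynomial.X : Polynomial ℝ) • M.map (Polynomial.C : ℝ →+* Polynomial ℝ) +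
        (1 : Matrix (Fin n) (Fin n) ℝ).map (Polynomial.C : ℝ →+* Polynomial ℝ)).det
  have hP : ∀ t : ℝ, P.eval t = (1 + t • A).det := by
    intro t
    have h1 : (1 + t • A).det = (t • M + 1).det := by
      rw [ContinuousLinearMap.det, ← LinearMap.det_toMatrix b]
      congr 1
      have : ((1 + t • A : E →L[ℝ] E) : E →ₗ[ℝ] E) = t • (A : E →ₗ[ℝ] E) + 1 := by
        ext v; simp [add_comm]
      rw [this, map_add, map_smul, LinearMap.toMatrix_one]
    rw [h1]
    have h2 := RingHom.map_det (Polynomial.evalRingHom t)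
      ((Polynomial.X : Polynomial ℝ) • M.map (Polynomial.C : ℝ →+* Polynomial ℝ) +
        (1 : Matrix (Fin n) (Fin n) ℝ).map (Polynomial.C : ℝ →+* Polynomial ℝ))
    rw [Polynomial.coe_evalRingHom] at h2
    rw [h2]
    congr 1
    ext i j
    rcases eq_or_ne i j with rfl | h
    · simp; ring
    · simp [h]; ring
  have hdeg : P.degree < ((Finset.range (n + 1)).card : WithBot ℕ) := by
    have h1 : P.natDegree ≤ n := by
      have := Polynomial.natDegree_det_X_add_C_le M (1 : Matrix (Fin n) (Fin n) ℝ)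
      rwa [Fintype.card_fin] at this
    rw [Finset.card_range]
    exact lt_of_le_of_lt Polynomial.degree_le_natDegree (by exact_mod_cast Nat.lt_succ_of_le h1)
  have h3 := Lagrange.eq_interpolate hs hdeg
  have h4 : P.eval 1 = (1 + A).det := by rw [hP, one_smul]
  rw [← h4, h3, Lagrange.interpolate_apply, Polynomial.eval_finsetSum]
  refine Finset.sum_congr rfl fun j _ => ?_
  rw [Polynomial.eval_mul, Polynomial.eval_C, hP, mul_comm]

lemma det_one_add_pos (A : E →L[ℝ] E) (hA : ‖A‖ < 1) : 0 < (1 + A).det := by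
  have hcont : Continuous fun s : ℝ => (1 + s • A).det :=
    ContinuousLinearMap.continuous_det.comp (by fun_prop)
  have hne : ∀ s ∈ Icc (0:ℝ) 1, (1 + s • A).det ≠ 0 := by
    intro s hs
    have h1 : ‖-(s • A)‖ < 1 := by
      rw [norm_neg, norm_smul, Real.norm_of_nonneg hs.1]
      exact lt_of_le_of_lt (mul_le_of_le_one_left (norm_nonneg _) hs.2) hA
    have h2 := isUnit_one_sub_of_norm_lt_one h1
    rw [sub_neg_eq_add] at h2
    have h3 : IsUnit ((1 + s • A : E →L[ℝ] E) : E →ₗ[ℝ] E) :=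
      h2.map (ContinuousLinearMap.toLinearMapRingHom (R₁ := ℝ) (M₁ := E))
    exact (LinearMap.isUnit_iff_isUnit_det _).1 h3 |>.ne_zero
  by_contra! hcon
  have h0 : (1 + (0:ℝ) • A).det = 1 := by
    rw [zero_smul, add_zero]; exact LinearMap.det_id
  have h1 : (1 + (1:ℝ) • A).det ≤ 0 := by rwa [one_smul]
  obtain ⟨s, hs, hs0⟩ := intermediate_value_Icc' (zero_le_one' ℝ) hcont.continuousOn
    (show (0:ℝ) ∈ Icc _ _ from ⟨h1, by rw [h0]; exact zero_le_one⟩)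
  exact hne s hs hs0

/-- For `s` small, `1 + s p` is a bijection of the ball, so the integral of its Jacobian is the
volume of the ball. -/
lemma integral_det_small [MeasurableSpace E] [BorelSpace E] {p : E → E} {L : NNReal} {R : ℝ}
    (hp : LipschitzWith L p) (hp0 : ∀ v, R ≤ ‖v‖ → p v = 0)
    (hd : ∀ v ∈ Metric.ball (0:E) R, DifferentiableAt ℝ p v) {s : ℝ} (hs : 0 < s)
    (hsL : s * L < 1) :
    IntegrableOn (fun v => (1 + s • fderiv ℝ p v).det) (Metric.ball (0:E) R) ∧
    ∫ v in Metric.ball (0:E) R, (1 + s • fderiv ℝ p v).det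
      = (volume : Measure E).real (Metric.ball 0 R) := by
  set G : E → E := fun v => v + s • p v with hG
  have hinj : Function.Injective G := by
    intro v w hvw
    have h1 : v - w = s • (p w - p v) := by
      simp only [hG] at hvw
      rw [smul_sub, sub_eq_sub_iff_add_eq_add, hvw, add_comm]
    have h2 : ‖v - w‖ ≤ s * L * ‖v - w‖ := by
      conv_lhs => rw [h1, norm_smul, Real.norm_of_nonneg hs.le]
      have := hp.norm_sub_le w v
      rw [norm_sub_rev w v] at this
      nlinarith
    have h3 : ‖v - w‖ = 0 := by nlinarith [norm_nonneg (v - w)]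
    exact sub_eq_zero.1 (norm_eq_zero.1 h3)
  have hsurj : Function.Surjective G := by
    intro w
    have hc : ContractingWith (Real.toNNReal s * L) fun v => w - s • p v := by
      refine ⟨?_, LipschitzWith.of_dist_le_mul fun v v' => ?_⟩
      · rw [← NNReal.coe_lt_coe]; simpa [hs.le] using hsL
      · rw [dist_eq_norm, dist_eq_norm, sub_sub_sub_cancel_left, ← smul_sub, norm_smul,
          Real.norm_of_nonneg hs.le, NNReal.coe_mul, Real.coe_toNNReal _ hs.le, mul_assoc,
          norm_sub_rev v v']
        exact mul_le_mul_of_nonneg_left (hp.norm_sub_le _ _) hs.le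
    refine ⟨hc.fixedPoint, ?_⟩
    have : w - s • p hc.fixedPoint = hc.fixedPoint := hc.fixedPoint_isFixedPt
    simp only [hG]
    exact (sub_eq_iff_eq_add.1 this).symm
  have hfix : ∀ v, R ≤ ‖v‖ → G v = v := fun v hv => by simp [hG, hp0 v hv]
  have himage : G '' Metric.ball 0 R = Metric.ball 0 R := by
    ext w
    simp only [Set.mem_image, mem_ball_zero_iff]
    constructor
    · rintro ⟨v, hv, rfl⟩
      by_contra! h
      have := hinj (hfix _ h)
      rw [this] at h
      linarith
    · intro hw
      obtain ⟨v, rfl⟩ := hsurj w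
      refine ⟨v, ?_, rfl⟩
      by_contra! h
      rw [hfix v h] at hw
      linarith
  have hderiv : ∀ v ∈ Metric.ball (0:E) R,
      HasFDerivWithinAt G (1 + s • fderiv ℝ p v) (Metric.ball 0 R) v := fun v hv =>
    ((hasFDerivAt_id v).add ((hd v hv).hasFDerivAt.const_smul s)).hasFDerivWithinAt
  have hpos : ∀ v ∈ Metric.ball (0:E) R, 0 < (1 + s • fderiv ℝ p v).det := by
    intro v hv
    refine det_one_add_pos _ ?_
    rw [norm_smul, Real.norm_of_nonneg hs.le]
    exact lt_of_le_of_lt (mul_le_mul_of_nonneg_left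
      ((hd v hv).hasFDerivAt.le_of_lipschitz hp) hs.le) hsL
  have hI := (integrableOn_image_iff_integrableOn_abs_det_fderiv_smul volume
    Metric.isOpen_ball.measurableSet hderiv hinj.injOn (fun _ => (1:ℝ))).1 (by
      rw [himage]; exact integrableOn_const Metric.isBounded_ball.measure_lt_top.ne)
  have hJ := integral_image_eq_integral_abs_det_fderiv_smul volume
    Metric.isOpen_ball.measurableSet hderiv hinj.injOn (fun _ => (1:ℝ))
  have hcongr : ∀ v ∈ Metric.ball (0:E) R,
      |(1 + s • fderiv ℝ p v).det| • (1:ℝ) = (1 + s • fderiv ℝ p v).det := fun v hv => by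
    rw [abs_of_pos (hpos v hv), smul_eq_mul, mul_one]
  refine ⟨hI.congr_fun hcongr Metric.isOpen_ball.measurableSet, ?_⟩
  rw [himage, setIntegral_congr_fun Metric.isOpen_ball.measurableSet hcongr] at hJ
  rw [← hJ, setIntegral_const, smul_eq_mul, mul_one]

/-- The Jacobian of a Lipschitz perturbation of the identity which is supported in a ball cannot
vanish identically on that ball: its integral is the volume of the ball. -/
lemma exists_det_ne_zero {p : E → E} {L : NNReal} {R : ℝ} (hR : 0 < R)
    (hp : LipschitzWith L p) (hp0 : ∀ v, R ≤ ‖v‖ → p v = 0)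
    (hd : ∀ v ∈ Metric.ball (0:E) R, DifferentiableAt ℝ p v) :
    ∃ v ∈ Metric.ball (0:E) R, (1 + fderiv ℝ p v).det ≠ 0 := by
  borelize E
  by_contra! hcon
  set n := Module.finrank ℝ E
  let s : ℕ → ℝ := fun j => 1 / ((L + 1) * (j + 1))
  have hL : (0:ℝ) ≤ L := L.2
  have hs : ∀ j, 0 < s j := fun j => by positivity
  have hsL : ∀ j, s j * L < 1 := fun j => by
    simp only [s]
    rw [div_mul_eq_mul_div, one_mul, div_lt_one (by positivity)]
    nlinarith [(Nat.cast_nonneg j : (0:ℝ) ≤ j)]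
  have hinj : Set.InjOn s (Finset.range (n + 1) : Finset ℕ) := by
    intro i _ j _ hij
    simp only [s, one_div, inv_inj] at hij
    have := mul_left_cancel₀ (by positivity) hij
    exact_mod_cast add_right_cancel this
  set ℓ : ℕ → ℝ := fun j => (Lagrange.basis (Finset.range (n + 1)) s j).eval 1 with hℓ
  have hsum : ∑ j ∈ Finset.range (n + 1), ℓ j = 1 := by
    have := congrArg (Polynomial.eval 1) (Lagrange.sum_basis hinj ⟨0, by simp⟩)
    simpa [Polynomial.eval_finsetSum] using this
  have key : ∫ v in Metric.ball (0:E) R, (∑ j ∈ Finset.range (n + 1),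
      ℓ j * (1 + s j • fderiv ℝ p v).det) = (volume : Measure E).real (Metric.ball 0 R) := by
    rw [integral_finsetSum _ fun j _ =>
      ((integral_det_small hp hp0 hd (hs j) (hsL j)).1.const_mul (ℓ j))]
    simp_rw [integral_const_mul]
    rw [Finset.sum_congr rfl fun j _ => by
      rw [(integral_det_small hp hp0 hd (hs j) (hsL j)).2], ← Finset.sum_mul, hsum, one_mul]
  have hzero : ∫ v in Metric.ball (0:E) R, (∑ j ∈ Finset.range (n + 1),
      ℓ j * (1 + s j • fderiv ℝ p v).det) = 0 := by
    rw [setIntegral_congr_fun (g := fun _ => (0:ℝ)) Metric.isOpen_ball.measurableSet]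
    · simp
    · intro v hv
      simp only [hℓ]
      rw [← det_one_add_interp _ s hinj, hcon v hv]
  rw [hzero] at key
  have : 0 < (volume : Measure E).real (Metric.ball 0 R) :=
    ENNReal.toReal_pos (Metric.measure_ball_pos _ _ hR).ne' Metric.isBounded_ball.measure_lt_top.ne
  linarith

/-- The retraction of the complement of the `δ`-ball onto the complement of the `R`-ball differs
from the identity by a Lipschitz map (after a harmless truncation inside the `δ`-ball). -/
lemma lipschitz_radial {F : Type*} [NormedAddCommGroup F] [NormedSpace ℝ F] {δ R : ℝ}
    (hδ : 0 < δ) (hR : 0 < R) :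
    ∃ C : NNReal, LipschitzWith C fun w : F => (max 0 (R - ‖w‖) / max δ ‖w‖) • w := by
  have hn : ∀ w w' : F, ‖(max δ ‖w‖)⁻¹ • w - (max δ ‖w'‖)⁻¹ • w'‖ ≤ 2 / δ * ‖w - w'‖ := by
    intro w w'
    set a := max δ ‖w‖
    set a' := max δ ‖w'‖
    have ha : δ ≤ a := le_max_left _ _
    have ha' : δ ≤ a' := le_max_left _ _
    have hwa' : ‖w'‖ ≤ a' := le_max_right _ _
    have ha0 : 0 < a := hδ.trans_le ha
    have ha0' : 0 < a' := hδ.trans_le ha'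
    have haa : |a' - a| ≤ ‖w - w'‖ := by
      have h1 := abs_max_sub_max_le_max δ ‖w'‖ δ ‖w‖
      have h2 := abs_norm_sub_norm_le w' w
      rw [sub_self, abs_zero, max_eq_right (a := (0:ℝ)) (abs_nonneg _)] at h1
      rw [norm_sub_rev]
      exact h1.trans h2
    have h1 : a⁻¹ • w - a'⁻¹ • w' = a⁻¹ • (w - w') + (a⁻¹ * a'⁻¹ * (a' - a)) • w' := by
      have : a⁻¹ * a'⁻¹ * (a' - a) = a⁻¹ - a'⁻¹ := by field_simp
      rw [this, smul_sub, sub_smul]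
      abel
    rw [h1]
    refine (norm_add_le _ _).trans ?_
    rw [norm_smul, norm_smul, norm_mul, norm_mul, Real.norm_of_nonneg (inv_pos.2 ha0).le,
      Real.norm_of_nonneg (inv_pos.2 ha0').le, Real.norm_eq_abs]
    have h2 : a⁻¹ ≤ δ⁻¹ := inv_anti₀ hδ ha
    have h3 : a⁻¹ * a'⁻¹ * |a' - a| * ‖w'‖ ≤ a⁻¹ * ‖w - w'‖ := by
      have : a'⁻¹ * ‖w'‖ ≤ 1 := by
        rw [inv_mul_le_iff₀ ha0', mul_one]; exact hwa'
      calc a⁻¹ * a'⁻¹ * |a' - a| * ‖w'‖ = a⁻¹ * |a' - a| * (a'⁻¹ * ‖w'‖) := by ring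
        _ ≤ a⁻¹ * |a' - a| * 1 := by gcongr
        _ ≤ a⁻¹ * ‖w - w'‖ := by rw [mul_one]; gcongr
    calc a⁻¹ * ‖w - w'‖ + a⁻¹ * a'⁻¹ * |a' - a| * ‖w'‖ ≤ 2 * (a⁻¹ * ‖w - w'‖) := by linarith
      _ ≤ 2 * (δ⁻¹ * ‖w - w'‖) := by gcongr
      _ = 2 / δ * ‖w - w'‖ := by ring
  have hn1 : ∀ w : F, ‖(max δ ‖w‖)⁻¹ • w‖ ≤ 1 := by
    intro w
    have h0 : 0 < max δ ‖w‖ := hδ.trans_le (le_max_left _ _)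
    rw [norm_smul, Real.norm_of_nonneg (inv_pos.2 h0).le, inv_mul_le_iff₀ h0, mul_one]
    exact le_max_right _ _
  refine ⟨Real.toNNReal (R * (2 / δ) + 1), LipschitzWith.of_dist_le_mul fun w w' => ?_⟩
  rw [Real.coe_toNNReal _ (by positivity), dist_eq_norm, dist_eq_norm]
  set m := max 0 (R - ‖w‖)
  set m' := max 0 (R - ‖w'‖)
  have hm : |m| ≤ R := by
    rw [abs_of_nonneg (le_max_left _ _)]
    exact max_le hR.le (by linarith [norm_nonneg w])
  have hmm : |m - m'| ≤ ‖w - w'‖ := by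
    have h1 := abs_max_sub_max_le_max 0 (R - ‖w‖) 0 (R - ‖w'‖)
    have h2 := abs_norm_sub_norm_le w' w
    rw [sub_self, abs_zero, max_eq_right (a := (0:ℝ)) (abs_nonneg (_ - _)),
      sub_sub_sub_cancel_left] at h1
    rw [norm_sub_rev]
    exact h1.trans h2
  have h1 : (m / max δ ‖w‖) • w - (m' / max δ ‖w'‖) • w'
      = m • ((max δ ‖w‖)⁻¹ • w - (max δ ‖w'‖)⁻¹ • w') + (m - m') • ((max δ ‖w'‖)⁻¹ • w') := by
    simp only [div_eq_mul_inv, mul_smul, smul_sub, sub_smul]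
    abel
  rw [h1]
  refine (norm_add_le _ _).trans ?_
  rw [norm_smul, norm_smul, Real.norm_eq_abs, Real.norm_eq_abs, add_mul, one_mul, mul_assoc]
  have h2 := hn w w'
  have h3 := hn1 w'
  gcongr
  calc |m - m'| * ‖(max δ ‖w'‖)⁻¹ • w'‖ ≤ ‖w - w'‖ * 1 := by gcongr
    _ = _ := mul_one _

/-- Brouwer's theorem in the form used below: a bounded `C¹` self-map of a Euclidean space has a
fixed point. Otherwise `v - B v`, cut off to the identity near infinity and projected radially to
a large sphere, would retract a ball onto its boundary, which contradicts
`exists_det_ne_zero`. -/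
theorem exists_fixed_point {B : E → E} (hB : ContDiff ℝ 1 B) {C : ℝ} (hC : ∀ v, ‖B v‖ ≤ C) :
    ∃ v, B v = v := by
  by_contra! hfp
  have hC0 : 0 ≤ C := (norm_nonneg _).trans (hC 0)
  let χ : ContDiffBump (0 : E) := ⟨C + 1, C + 2, by linarith, by linarith⟩
  set q : E → E := fun v => χ v • B v with hq
  have hqC : ContDiff ℝ 1 q := χ.contDiff.smul hB
  have hqle : ∀ v, ‖q v‖ ≤ C := fun v => by
    rw [hq, norm_smul, Real.norm_of_nonneg χ.nonneg]
    exact (mul_le_of_le_one_left (norm_nonneg _) χ.le_one).trans (hC v)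
  have hq0 : ∀ v, C + 2 ≤ ‖v‖ → q v = 0 := fun v hv => by
    have : χ v = 0 := χ.zero_of_le_dist (by simpa using hv)
    simp [hq, this]
  have hqs : HasCompactSupport q := χ.hasCompactSupport.smul_right
  obtain ⟨Lq, hLq⟩ := hqC.lipschitzWith_of_hasCompactSupport hqs one_ne_zero
  set F : E → E := fun v => v - q v with hF
  have hFne : ∀ v, F v ≠ 0 := by
    intro v hv
    have h1 : v = q v := sub_eq_zero.1 hv
    have h2 : ‖v‖ ≤ C := by rw [h1]; exact hqle v
    have h3 : χ v = 1 := χ.one_of_mem_closedBall (by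
      rw [mem_closedBall_zero_iff]; show ‖v‖ ≤ C + 1; linarith)
    simp only [hq, h3, one_smul] at h1
    exact hfp v h1.symm
  have hFcont : Continuous F := continuous_id.sub hqC.continuous
  obtain ⟨δ, hδ, hδF⟩ : ∃ δ > 0, ∀ v, δ ≤ ‖F v‖ := by
    obtain ⟨v₀, -, hv₀⟩ := (isCompact_closedBall (0:E) (C + 2)).exists_isMinOn
      ⟨0, by simp; linarith⟩ hFcont.norm.continuousOn
    refine ⟨min ‖F v₀‖ (C + 2), lt_min (norm_pos_iff.2 (hFne _)) (by linarith), fun v => ?_⟩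
    rcases le_total ‖v‖ (C + 2) with h | h
    · exact (min_le_left _ _).trans (hv₀ (by simpa using h))
    · have : F v = v := by simp [hF, hq0 v h]
      rw [this]; exact (min_le_right _ _).trans h
  set R := 2 * C + 3 with hR
  have hR0 : 0 < R := by rw [hR]; linarith
  have hFR : ∀ v, R ≤ ‖v‖ → F v = v := fun v hv => by
    simp [hF, hq0 v (by rw [hR] at hv; linarith)]
  have hFlt : ∀ v, ‖v‖ < R → ‖F v‖ < R := by
    intro v hv
    rcases le_total ‖v‖ (C + 2) with h | h
    · calc ‖F v‖ ≤ ‖v‖ + ‖q v‖ := norm_sub_le _ _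
        _ ≤ (C + 2) + C := add_le_add h (hqle v)
        _ < R := by rw [hR]; linarith
    · have : F v = v := by simp [hF, hq0 v h]
      rwa [this]
  obtain ⟨Cr, hCr⟩ := lipschitz_radial (F := E) hδ hR0
  set ρ : E → E := fun w => (max 0 (R - ‖w‖) / max δ ‖w‖) • w with hρ
  set p : E → E := fun v => ρ (F v) - q v with hp
  have hFL : LipschitzWith (1 + Lq) F := LipschitzWith.id.sub hLq
  have hpL : LipschitzWith (Cr * (1 + Lq) + Lq) p := (hCr.comp hFL).sub hLq
  have hp0 : ∀ v, R ≤ ‖v‖ → p v = 0 := by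
    intro v hv
    have h1 : q v = 0 := hq0 v (by rw [hR] at hv; linarith)
    have h2 : R - ‖v‖ ≤ 0 := by linarith
    simp [hp, hρ, hFR v hv, h1, max_eq_left h2]
  have hFd : Differentiable ℝ F := differentiable_id.sub (hqC.differentiable one_ne_zero)
  -- On the open ball `v + p v` is the radial projection of `F v` to the sphere of radius `R`.
  have hG : ∀ v ∈ Metric.ball (0:E) R, v + p v = (R / ‖F v‖) • F v := by
    intro v hv
    have h1 := hFlt v (by simpa using hv)
    have h2 : 0 < ‖F v‖ := norm_pos_iff.2 (hFne v)
    have h3 : v + p v = F v + ρ (F v) := by simp only [hp, hF]; abel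
    rw [h3, hρ]
    simp only
    rw [max_eq_right (by linarith), max_eq_right (hδF v)]
    have h4 : R / ‖F v‖ = 1 + (R - ‖F v‖) / ‖F v‖ := by field_simp; ring
    rw [h4, add_smul, one_smul]
  have hGd : ∀ v, DifferentiableAt ℝ (fun v => (R / ‖F v‖) • F v) v := by
    intro v
    have h1 : DifferentiableAt ℝ (fun v => ‖F v‖) v := (hFd v).norm ℝ (hFne v)
    have h2 : DifferentiableAt ℝ (fun v => R / ‖F v‖) v := by
      simp only [div_eq_mul_inv]
      exact (h1.fun_inv (norm_ne_zero_iff.2 (hFne v))).const_mul R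
    exact h2.smul (hFd v)
  have hev : ∀ v ∈ Metric.ball (0:E) R, (fun v => v + p v) =ᶠ[nhds v]
      fun v => (R / ‖F v‖) • F v := fun v hv =>
    Filter.eventually_of_mem (Metric.isOpen_ball.mem_nhds hv) hG
  have hpd : ∀ v ∈ Metric.ball (0:E) R, DifferentiableAt ℝ p v := by
    intro v hv
    have h1 := ((hev v hv).differentiableAt_iff.2 (hGd v)).sub differentiableAt_id
    exact h1.congr_of_eventuallyEq (Filter.Eventually.of_forall fun w => by simp)
  obtain ⟨v, hv, hdet⟩ := exists_det_ne_zero hR0 hpL hp0 hpd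
  set A := 1 + fderiv ℝ p v with hA
  have hGA : HasFDerivAt (fun v => v + p v) A v := (hasFDerivAt_id v).add (hpd v hv).hasFDerivAt
  -- The image lies on a sphere, so the range of the derivative is orthogonal to `G v ≠ 0`.
  have hsq : (fun w => (inner ℝ (w + p w) (w + p w) : ℝ)) =ᶠ[nhds v] fun _ => R ^ 2 := by
    refine Filter.eventually_of_mem (Metric.isOpen_ball.mem_nhds hv) fun w hw => ?_
    show (inner ℝ (w + p w) (w + p w) : ℝ) = R ^ 2
    have h2 : ‖F w‖ ≠ 0 := norm_ne_zero_iff.2 (hFne w)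
    rw [hG w hw, real_inner_self_eq_norm_sq, norm_smul, norm_div, norm_norm,
      Real.norm_of_nonneg hR0.le, div_mul_cancel₀ _ h2]
  have hin := hGA.inner ℝ hGA
  have hz := (hin.congr_of_eventuallyEq hsq.symm).unique (hasFDerivAt_const (R ^ 2) v)
  have horth : ∀ d, (inner ℝ (v + p v) (A d) : ℝ) = 0 := by
    intro d
    have := congrArg (fun φ : E →L[ℝ] ℝ => φ d) hz
    simp [fderivInnerCLM_apply] at this
    have h2 := real_inner_comm (v + p v) (A d)
    linarith
  have hGne : v + p v ≠ 0 := by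
    rw [hG v hv]
    exact smul_ne_zero (div_ne_zero hR0.ne' (norm_ne_zero_iff.2 (hFne v))) (hFne v)
  have hunit : IsUnit (A : E →ₗ[ℝ] E) :=
    (LinearMap.isUnit_iff_isUnit_det _).2 (isUnit_iff_ne_zero.2 hdet)
  have hsurj : Function.Surjective (A : E →ₗ[ℝ] E) :=
    ((Module.End.isUnit_iff _).1 hunit).2
  obtain ⟨d, hd⟩ := hsurj (v + p v)
  have := horth d
  rw [show A d = v + p v from hd, inner_self_eq_zero] at this
  exact hGne this

end Brouwer

/-! ### A min-max principle for perturbed quadratic forms -/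

section MinMax

variable {E : Type*} [NormedAddCommGroup E] [InnerProductSpace ℝ E] [FiniteDimensional ℝ E]

/-- A min-max principle. A bounded `C^{1,1}` perturbation `g` of the split quadratic form `⟪w, y⟫`
has a critical point whose critical value is at most `sup g`. The maps `p`, `q` are the partial
gradients of `g`, and `hexp` expresses that they are Lipschitz. If there were no such critical
point, discrete gradient descent would push the antidiagonal, on which the form is nonpositive,
below every level, whereas by Brouwer's theorem its image always meets the diagonal. -/
theorem exists_critical_le {g : E × E → ℝ} {p q : E × E → E} {C L c m : ℝ}
    (hg : Continuous g) (hp : ContDiff ℝ 1 p) (hq : ContDiff ℝ 1 q)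
    (hpC : ∀ z, ‖p z‖ ≤ C) (hqC : ∀ z, ‖q z‖ ≤ C) (hc : ∀ z, c ≤ g z) (hm : ∀ z, g z ≤ m)
    (hL : 0 ≤ L)
    (hexp : ∀ z d : E × E, g (z + d) ≤ g z + inner ℝ (p z) d.1 + inner ℝ (q z) d.2
      + L * (‖d.1‖ ^ 2 + ‖d.2‖ ^ 2)) :
    ∃ z : E × E, z.2 + p z = 0 ∧ z.1 + q z = 0 ∧ inner ℝ z.1 z.2 + g z ≤ m := by
  set S : E × E → ℝ := fun z => inner ℝ z.1 z.2 + g z with hS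
  set r : E × E → ℝ := fun z => ‖z.2 + p z‖ ^ 2 + ‖z.1 + q z‖ ^ 2 with hr
  have hC0 : 0 ≤ C := (norm_nonneg _).trans (hpC 0)
  have hScont : Continuous S := (continuous_fst.inner continuous_snd).add hg
  have hrcont : Continuous r := by
    have := hp.continuous
    have := hq.continuous
    fun_prop
  by_contra! hcon
  -- Without critical points below level `m`, the gradient is bounded away from zero there.
  obtain ⟨ε, hε, hrε⟩ : ∃ ε > 0, ∀ z, S z ≤ m → ε ≤ r z := by
    have hout : ∀ z : E × E, C + 1 ≤ ‖z‖ → 1 ≤ r z := by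
      intro z hz
      rcases le_max_iff.1 (Prod.norm_def z ▸ hz) with h | h
      · have h1 : 1 ≤ ‖z.1 + q z‖ := by
          have := norm_sub_le (z.1 + q z) (q z)
          rw [add_sub_cancel_right] at this
          linarith [hqC z]
        simp only [hr]
        nlinarith [sq_nonneg ‖z.2 + p z‖]
      · have h1 : 1 ≤ ‖z.2 + p z‖ := by
          have := norm_sub_le (z.2 + p z) (p z)
          rw [add_sub_cancel_right] at this
          linarith [hpC z]
        simp only [hr]
        nlinarith [sq_nonneg ‖z.1 + q z‖]
    set Kc := Metric.closedBall (0 : E × E) (C + 1) ∩ {z | S z ≤ m} with hKc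
    have hKcpt : IsCompact Kc :=
      (isCompact_closedBall _ _).inter_right (isClosed_le hScont continuous_const)
    rcases Kc.eq_empty_or_nonempty with he | hne
    · refine ⟨1, one_pos, fun z hz => hout z ?_⟩
      by_contra! h
      have : z ∈ Kc := ⟨by simpa using h.le, hz⟩
      rw [he] at this
      exact this
    · obtain ⟨z₀, hz₀, hmin⟩ := hKcpt.exists_isMinOn hne hrcont.continuousOn
      have hpos : 0 < r z₀ := by
        have h0 : 0 ≤ r z₀ := by positivity
        refine lt_of_le_of_ne h0 fun h => ?_
        have h1 : ‖z₀.2 + p z₀‖ ^ 2 = 0 := by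
          simp only [hr] at h
          nlinarith [sq_nonneg ‖z₀.2 + p z₀‖, sq_nonneg ‖z₀.1 + q z₀‖]
        have h2 : ‖z₀.1 + q z₀‖ ^ 2 = 0 := by
          simp only [hr] at h
          nlinarith [sq_nonneg ‖z₀.2 + p z₀‖, sq_nonneg ‖z₀.1 + q z₀‖]
        have h3 := hcon z₀ (by simpa using h1) (by simpa using h2)
        have h4 : S z₀ ≤ m := hz₀.2
        simp only [hS] at h4
        linarith
      refine ⟨min (r z₀) 1, lt_min hpos one_pos, fun z hz => ?_⟩
      rcases le_total (C + 1) ‖z‖ with h | h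
      · exact (min_le_right _ _).trans (hout z h)
      · exact (min_le_left _ _).trans (hmin ⟨by simpa using h, hz⟩)
  set h : ℝ := 1 / (2 * (L + 1)) with hh
  have hh0 : 0 < h := by positivity
  set Φ : E × E → E × E := fun z => (z.1 - h • (z.2 + p z), z.2 - h • (z.1 + q z)) with hΦ
  have hdesc : ∀ z, S (Φ z) ≤ S z - h / 2 * r z := by
    intro z
    set P := z.2 + p z
    set Q := z.1 + q z
    have h1 : Φ z = z + (-(h • P), -(h • Q)) := by
      ext <;> simp [hΦ, P, Q, sub_eq_add_neg]
    have h2 := hexp z (-(h • P), -(h • Q))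
    have h3 : S (Φ z) = inner ℝ (z.1 - h • P) (z.2 - h • Q) + g (z + (-(h • P), -(h • Q))) := by
      rw [← h1]
    have h4 : p z = P - z.2 := by simp [P]
    have h5 : q z = Q - z.1 := by simp [Q]
    rw [h3]
    simp only [norm_neg, norm_smul, Real.norm_of_nonneg hh0.le] at h2
    rw [h4, h5] at h2
    simp only [inner_sub_left, inner_sub_right, inner_neg_right, real_inner_smul_left,
      real_inner_smul_right, real_inner_self_eq_norm_sq] at h2 ⊢
    have h6 : (inner ℝ P Q : ℝ) ≤ (‖P‖ ^ 2 + ‖Q‖ ^ 2) / 2 := by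
      have := real_inner_le_norm P Q
      nlinarith [sq_nonneg (‖P‖ - ‖Q‖)]
    have h7 : (L + 1 / 2) * h ≤ 1 / 2 := by
      rw [hh, mul_one_div, div_le_iff₀ (by positivity)]
      linarith
    have h8 : (L + 1 / 2) * h * (h * (‖P‖ ^ 2 + ‖Q‖ ^ 2)) ≤ 1 / 2 * (h * (‖P‖ ^ 2 + ‖Q‖ ^ 2)) :=
      mul_le_mul_of_nonneg_right h7 (by positivity)
    have h9 : h * h * (inner ℝ P Q : ℝ) ≤ h * h * ((‖P‖ ^ 2 + ‖Q‖ ^ 2) / 2) :=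
      mul_le_mul_of_nonneg_left h6 (by positivity)
    have h10 : r z = ‖P‖ ^ 2 + ‖Q‖ ^ 2 := rfl
    have h11 : S z = inner ℝ z.1 z.2 + g z := rfl
    have h12 := real_inner_comm z.1 Q
    have h13 := real_inner_comm z.2 P
    rw [h10, h11]
    nlinarith
  have hΦC : ContDiff ℝ 1 Φ := by fun_prop
  have hiter : ∀ n, ContDiff ℝ 1 (Φ^[n]) := fun n => by
    induction n with
    | zero => exact contDiff_id
    | succ n ih => rw [Function.iterate_succ']; exact hΦC.comp ih
  set b : ℕ → E × E → E := fun n z =>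
    (1 + h) ^ n • (z.1 - z.2) - ((Φ^[n] z).1 - (Φ^[n] z).2) with hb
  have hbC : ∀ n, ContDiff ℝ 1 (b n) := fun n => by
    have := hiter n
    fun_prop
  have hbb : ∀ n, ∃ β, ∀ z, ‖b n z‖ ≤ β := by
    intro n
    induction n with
    | zero => exact ⟨0, fun z => by simp [hb]⟩
    | succ n ih =>
      obtain ⟨β, hβ⟩ := ih
      refine ⟨(1 + h) * β + h * (C + C), fun z => ?_⟩
      have h1 : b (n + 1) z = (1 + h) • b n z + h • (p (Φ^[n] z) - q (Φ^[n] z)) := by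
        simp only [hb, Function.iterate_succ_apply', hΦ, pow_succ', mul_smul]
        module
      rw [h1]
      refine (norm_add_le _ _).trans ?_
      rw [norm_smul, norm_smul, Real.norm_of_nonneg hh0.le, Real.norm_of_nonneg (by positivity)]
      have := norm_sub_le (p (Φ^[n] z)) (q (Φ^[n] z))
      have := hpC (Φ^[n] z)
      have := hqC (Φ^[n] z)
      have := hβ z
      gcongr
      linarith
  obtain ⟨n, hn⟩ := exists_nat_gt ((m - c) / (h / 2 * ε))
  rw [div_lt_iff₀ (by positivity)] at hn
  obtain ⟨β, hβ⟩ := hbb n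
  have hpow : (0:ℝ) < (1 + h) ^ n := by positivity
  -- The point of the antidiagonal which the descent brings to the diagonal.
  obtain ⟨v, hv⟩ := exists_fixed_point
    (B := fun v : E => ((1 + h) ^ n)⁻¹ • b n ((1 / 2 : ℝ) • v, -((1 / 2 : ℝ) • v)))
    (by have := hbC n; fun_prop) (C := ((1 + h) ^ n)⁻¹ * β) (fun v => by
      rw [norm_smul, Real.norm_of_nonneg (inv_pos.2 hpow).le]
      exact mul_le_mul_of_nonneg_left (hβ _) (inv_pos.2 hpow).le)
  set z₀ : E × E := ((1 / 2 : ℝ) • v, -((1 / 2 : ℝ) • v)) with hz₀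
  have hdiag : (Φ^[n] z₀).1 = (Φ^[n] z₀).2 := by
    have h1 : b n z₀ = (1 + h) ^ n • v :=
      (inv_smul_eq_iff₀ hpow.ne').1 hv
    have h2 : z₀.1 - z₀.2 = v := by simp only [hz₀]; module
    simp only [hb, h2] at h1
    exact sub_eq_zero.1 (sub_eq_self.1 h1)
  have hlow : c ≤ S (Φ^[n] z₀) := by
    simp only [hS, hdiag, real_inner_self_eq_norm_sq]
    have := hc (Φ^[n] z₀)
    nlinarith [sq_nonneg ‖(Φ^[n] z₀).2‖]
  have hdown : ∀ k : ℕ, S (Φ^[k] z₀) ≤ m - k * (h / 2 * ε) := by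
    intro k
    induction k with
    | zero =>
      have h1 : (inner ℝ z₀.1 z₀.2 : ℝ) = -(‖(1 / 2 : ℝ) • v‖ ^ 2) := by
        simp only [hz₀, inner_neg_right, real_inner_self_eq_norm_sq]
      have := hm z₀
      simp only [hS, Function.iterate_zero, id_eq, h1, Nat.cast_zero, zero_mul]
      nlinarith [sq_nonneg ‖(1 / 2 : ℝ) • v‖]
    | succ k ih =>
      rw [Function.iterate_succ_apply']
      have h0 : 0 ≤ (k:ℝ) * (h / 2 * ε) := by positivity
      have h1 := hdesc (Φ^[k] z₀)
      have h2 := mul_le_mul_of_nonneg_left (hrε (Φ^[k] z₀) (by linarith)) (half_pos hh0).le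
      push_cast
      linarith
  linarith [hdown n]

end MinMax

/-! ### Chords of the symplectic Euler scheme -/

section Discrete

lemma norm_euclidean_le {N : ℕ} (x : EuclideanSpace ℝ (Fin N)) {B : ℝ} (hx : ∀ j, |x j| ≤ B) :
    ‖x‖ ≤ Real.sqrt (N * B ^ 2) := by
  rw [EuclideanSpace.norm_eq]
  refine Real.sqrt_le_sqrt ?_
  calc ∑ j, ‖x j‖ ^ 2 ≤ ∑ _j : Fin N, B ^ 2 :=
        Finset.sum_le_sum fun j _ => pow_le_pow_left₀ (norm_nonneg _) (hx j) 2
    _ = N * B ^ 2 := by simp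

lemma abs_sum_ite_le {N : ℕ} (P : Fin N → Prop) [DecidablePred P] (u : Fin N → ℝ) {B : ℝ}
    (hu : ∀ j, |u j| ≤ B) : |∑ j, if P j then u j else 0| ≤ N * B := by
  calc |∑ j, if P j then u j else 0| ≤ ∑ j, |if P j then u j else 0| :=
        Finset.abs_sum_le_sum_abs _ _
    _ ≤ ∑ _j : Fin N, B := Finset.sum_le_sum fun j _ => by
        split_ifs
        · exact hu j
        · rw [abs_zero]; exact (abs_nonneg _).trans (hu j)
    _ = N * B := by simp

/-- Discrete chords of small action. A chord of the symplectic Euler scheme with `N` steps from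
the line `y = 0` to the line `x = ξ` exists with discrete action at most `h ∑ max k i`. In terms of
the increments `w i = X (i + 1) - X i` and of `y i = Y (i + 1)` the discrete action is the
quadratic form `∑ w i y i` plus a bounded perturbation, so `exists_critical_le` applies. -/
theorem discrete_chord_le (N : ℕ) {h : ℝ} (hh : 0 ≤ h) (ξ : ℝ) {k a b : ℕ → ℝ × ℝ → ℝ}
    {m : ℕ → ℝ} {c L : ℝ} (hL : 0 ≤ L) (hk : ∀ i, Continuous (k i))
    (ha : ∀ i, ContDiff ℝ 1 (a i)) (hb : ∀ i, ContDiff ℝ 1 (b i))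
    (haL : ∀ i z, |a i z| ≤ L) (hbL : ∀ i z, |b i z| ≤ L)
    (hkm : ∀ i < N, ∀ z, k i z ≤ m i) (hkc : ∀ i < N, ∀ z, c ≤ k i z)
    (hexp : ∀ i < N, ∀ z d : ℝ × ℝ,
      k i (z + d) ≤ k i z + a i z * d.1 + b i z * d.2 + L * (d.1 ^ 2 + d.2 ^ 2)) :
    ∃ X Y : ℕ → ℝ, Y 0 = 0 ∧ X N = ξ ∧
      (∀ i < N, X (i + 1) = X i - h * b i (X i, Y (i + 1))) ∧
      (∀ i < N, Y (i + 1) = Y i + h * a i (X i, Y (i + 1))) ∧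
      ∑ i ∈ Finset.range N, (Y (i + 1) * (X (i + 1) - X i) + h * k i (X i, Y (i + 1)))
        ≤ h * ∑ i ∈ Finset.range N, m i := by
  let Xf : EuclideanSpace ℝ (Fin N) → ℕ → ℝ := fun w n =>
    ξ - ∑ j : Fin N, if n ≤ j then w j else 0
  have hXfC : ∀ n, ContDiff ℝ 1 fun w => Xf w n := by
    intro n
    refine contDiff_const.sub (ContDiff.sum fun j _ => ?_)
    split_ifs <;> fun_prop
  let pt : EuclideanSpace ℝ (Fin N) × EuclideanSpace ℝ (Fin N) → Fin N → ℝ × ℝ := fun z i =>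
    (Xf z.1 i, z.2 i)
  have hpt : ∀ i, ContDiff ℝ 1 fun z => pt z i := fun i => by
    have := hXfC i
    simp only [pt]
    fun_prop
  let g : EuclideanSpace ℝ (Fin N) × EuclideanSpace ℝ (Fin N) → ℝ := fun z =>
    h * ∑ i : Fin N, k i (pt z i)
  let p : EuclideanSpace ℝ (Fin N) × EuclideanSpace ℝ (Fin N) → EuclideanSpace ℝ (Fin N) := fun z =>
    WithLp.toLp 2 fun j : Fin N => -(h * ∑ i : Fin N, if i ≤ j then a i (pt z i) else 0)
  let q : EuclideanSpace ℝ (Fin N) × EuclideanSpace ℝ (Fin N) → EuclideanSpace ℝ (Fin N) := fun z =>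
    WithLp.toLp 2 fun j : Fin N => h * b j (pt z j)
  have hg : Continuous g := by
    refine continuous_const.mul (continuous_finsetSum _ fun i _ => ?_)
    exact (hk i).comp (hpt i).continuous
  have hp : ContDiff ℝ 1 p := by
    refine contDiff_euclidean.2 fun j => ?_
    refine (contDiff_const.mul (ContDiff.sum fun i _ => ?_)).neg
    split_ifs
    · exact (ha i).comp (hpt i)
    · exact contDiff_const
  have hq : ContDiff ℝ 1 q := by
    refine contDiff_euclidean.2 fun j => ?_
    exact contDiff_const.mul ((hb j).comp (hpt j))
  set C := Real.sqrt (N * (h * (N * L)) ^ 2) + Real.sqrt (N * (h * L) ^ 2) with hC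
  have hpC : ∀ z, ‖p z‖ ≤ C := fun z => by
    refine (norm_euclidean_le _ fun j => ?_).trans (le_add_of_nonneg_right (Real.sqrt_nonneg _))
    simp only [p]
    rw [abs_neg, abs_mul, abs_of_nonneg hh]
    exact mul_le_mul_of_nonneg_left (abs_sum_ite_le _ _ fun i => haL _ _) hh
  have hqC : ∀ z, ‖q z‖ ≤ C := fun z => by
    refine (norm_euclidean_le _ fun j => ?_).trans (le_add_of_nonneg_left (Real.sqrt_nonneg _))
    simp only [q]
    rw [abs_mul, abs_of_nonneg hh]
    exact mul_le_mul_of_nonneg_left (hbL _ _) hh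
  have hgc : ∀ z, h * (N * c) ≤ g z := fun z => by
    refine mul_le_mul_of_nonneg_left ?_ hh
    calc N * c = ∑ _i : Fin N, c := by simp
      _ ≤ _ := Finset.sum_le_sum fun i _ => hkc i i.2 _
  have hgm : ∀ z, g z ≤ h * ∑ i ∈ Finset.range N, m i := fun z => by
    refine mul_le_mul_of_nonneg_left ?_ hh
    rw [← Fin.sum_univ_eq_sum_range]
    exact Finset.sum_le_sum fun i _ => hkm i i.2 _
  have hgexp : ∀ z d : EuclideanSpace ℝ (Fin N) × EuclideanSpace ℝ (Fin N),
      g (z + d) ≤ g z + inner ℝ (p z) d.1 + inner ℝ (q z) d.2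
        + h * L * (N * N + 1) * (‖d.1‖ ^ 2 + ‖d.2‖ ^ 2) := by
    intro z d
    have hd1 : ‖d.1‖ ^ 2 = ∑ j, d.1 j ^ 2 := by simp [EuclideanSpace.norm_sq_eq]
    have hd2 : ‖d.2‖ ^ 2 = ∑ j, d.2 j ^ 2 := by simp [EuclideanSpace.norm_sq_eq]
    set δ : Fin N → ℝ := fun i => -∑ j : Fin N, if i ≤ j then d.1 j else 0 with hδ
    have hpt' : ∀ i, pt (z + d) i = pt z i + (δ i, d.2 i) := by
      intro i
      ext
      · simp only [pt, Xf, hδ, Prod.fst_add, PiLp.add_apply, Fin.val_fin_le]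
        have : ∀ j : Fin N, (if i ≤ j then z.1 j + d.1 j else 0)
            = (if i ≤ j then z.1 j else 0) + if i ≤ j then d.1 j else 0 := fun j => by
          split_ifs <;> simp
        simp only [this, Finset.sum_add_distrib]
        ring
      · simp [pt]
    have hδ2 : ∀ i, δ i ^ 2 ≤ N * ‖d.1‖ ^ 2 := by
      intro i
      rw [hd1, hδ, neg_sq]
      calc (∑ j : Fin N, if i ≤ j then d.1 j else 0) ^ 2
          ≤ (Finset.univ : Finset (Fin N)).card * ∑ j, (if i ≤ j then d.1 j else 0) ^ 2 :=
            sq_sum_le_card_mul_sum_sq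
        _ ≤ N * ∑ j, d.1 j ^ 2 := by
            rw [Finset.card_univ, Fintype.card_fin]
            refine mul_le_mul_of_nonneg_left (Finset.sum_le_sum fun j _ => ?_) (Nat.cast_nonneg _)
            split_ifs
            · exact le_rfl
            · rw [zero_pow two_ne_zero]; positivity
    have hin1 : (inner ℝ (p z) d.1 : ℝ) = h * ∑ i : Fin N, a i (pt z i) * δ i := by
      have h1 : (inner ℝ (p z) d.1 : ℝ) = ∑ j : Fin N, d.1 j * p z j := by simp [PiLp.inner_apply]
      have h2 : ∀ j, d.1 j * p z j
          = ∑ i : Fin N, -(h * if i ≤ j then a i (pt z i) * d.1 j else 0) := by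
        intro j
        simp only [p]
        rw [Finset.sum_neg_distrib, ← Finset.mul_sum, mul_neg, mul_left_comm, Finset.mul_sum]
        congr 2
        refine Finset.sum_congr rfl fun i _ => ?_
        split_ifs <;> ring
      rw [h1, Finset.sum_congr rfl fun j _ => h2 j, Finset.sum_comm, Finset.mul_sum]
      refine Finset.sum_congr rfl fun i _ => ?_
      rw [Finset.sum_neg_distrib, ← Finset.mul_sum, hδ, mul_neg, mul_neg]
      simp only [mul_ite, mul_zero, Finset.mul_sum]
    have hin2 : (inner ℝ (q z) d.2 : ℝ) = h * ∑ i : Fin N, b i (pt z i) * d.2 i := by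
      have h1 : (inner ℝ (q z) d.2 : ℝ) = ∑ j : Fin N, d.2 j * q z j := by simp [PiLp.inner_apply]
      rw [h1, Finset.mul_sum]
      refine Finset.sum_congr rfl fun j _ => ?_
      simp only [q]
      ring
    have hsum : ∑ i : Fin N, k i (pt (z + d) i) ≤ ∑ i : Fin N, k i (pt z i)
        + ∑ i : Fin N, a i (pt z i) * δ i
            + ∑ i : Fin N, b i (pt z i) * d.2 i
        + L * (N * N + 1) * (‖d.1‖ ^ 2 + ‖d.2‖ ^ 2) := by
      calc ∑ i : Fin N, k i (pt (z + d) i) ≤ ∑ i : Fin N, (k i (pt z i) + a i (pt z i) * δ i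
            + b i (pt z i) * d.2 i + L * (N * ‖d.1‖ ^ 2 + d.2 i ^ 2)) := by
            refine Finset.sum_le_sum fun i _ => ?_
            rw [hpt' i]
            refine (hexp i i.2 (pt z i) (δ i, d.2 i)).trans ?_
            have := mul_le_mul_of_nonneg_left (hδ2 i) hL
            simp only
            linarith
        _ = ∑ i : Fin N, k i (pt z i) + ∑ i : Fin N, a i (pt z i) * δ i
            + ∑ i : Fin N, b i (pt z i) * d.2 i
            + L * (N * (N * ‖d.1‖ ^ 2) + ‖d.2‖ ^ 2) := by
            rw [Finset.sum_add_distrib, Finset.sum_add_distrib, Finset.sum_add_distrib,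
              ← Finset.mul_sum, Finset.sum_add_distrib, ← hd2]
            simp
        _ ≤ _ := by
            have h1 : N * (N * ‖d.1‖ ^ 2) + ‖d.2‖ ^ 2
                ≤ (N * N + 1) * (‖d.1‖ ^ 2 + ‖d.2‖ ^ 2) := by
              nlinarith [sq_nonneg ‖d.1‖, mul_nonneg (mul_self_nonneg (N:ℝ)) (sq_nonneg ‖d.2‖)]
            have := mul_le_mul_of_nonneg_left h1 hL
            linarith
    have := mul_le_mul_of_nonneg_left hsum hh
    rw [hin1, hin2]
    simp only [g]
    linarith
  obtain ⟨z, hz1, hz2, hz3⟩ := exists_critical_le hg hp hq hpC hqC hgc hgm (by positivity) hgexp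
  have hy : ∀ j : Fin N, z.2 j = h * ∑ i : Fin N, if i ≤ j then a i (pt z i) else 0 := fun j => by
    have := congrArg (fun x : EuclideanSpace ℝ (Fin N) => x j) hz1
    simp only [PiLp.add_apply, PiLp.zero_apply, p] at this
    linarith
  have hw : ∀ j : Fin N, z.1 j = -(h * b j (pt z j)) := fun j => by
    have := congrArg (fun x : EuclideanSpace ℝ (Fin N) => x j) hz2
    simp only [PiLp.add_apply, PiLp.zero_apply, q] at this
    linarith
  set Y : ℕ → ℝ := fun n => h * ∑ i : Fin N, if (i:ℕ) < n then a i (pt z i) else 0 with hY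
  have hYy : ∀ i : Fin N, Y (i + 1) = z.2 i := fun i => by
    rw [hy i, hY]
    simp only [Nat.lt_succ_iff, Fin.val_fin_le]
  have hpick : ∀ (u : Fin N → ℝ) (i : Fin N), ∑ j : Fin N, (if j = i then u j else 0) = u i :=
    fun u i => by simp
  have hXw : ∀ i : Fin N, Xf z.1 (i + 1) - Xf z.1 i = z.1 i := fun i => by
    simp only [Xf]
    rw [sub_sub_sub_cancel_left, ← Finset.sum_sub_distrib, ← hpick z.1 i]
    refine Finset.sum_congr rfl fun j _ => ?_
    rcases lt_trichotomy (i:ℕ) j with h1 | h1 | h1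
    · simp [h1, h1.le, Fin.ext_iff, h1.ne']
    · simp [h1, Fin.ext_iff]
    · simp [h1.not_ge, Fin.ext_iff, h1.ne, (Nat.lt_succ_of_lt h1).not_ge]
  have hYa : ∀ i : Fin N, Y (i + 1) - Y i = h * a i (pt z i) := fun i => by
    simp only [hY]
    rw [← mul_sub, ← Finset.sum_sub_distrib, ← hpick (fun i => a i (pt z i)) i]
    congr 1
    refine Finset.sum_congr rfl fun j _ => ?_
    rcases lt_trichotomy (i:ℕ) j with h1 | h1 | h1
    · simp [h1.not_gt, Fin.ext_iff, h1.ne', h1.not_ge]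
    · simp [h1, Fin.ext_iff]
    · simp [h1, Fin.ext_iff, h1.ne, Nat.lt_succ_of_lt h1]
  refine ⟨Xf z.1, Y, by simp [hY], ?_, ?_, ?_, ?_⟩
  · simp [Xf, not_le.2 (Fin.is_lt _)]
  · intro i hi
    have h1 := hXw ⟨i, hi⟩
    have h2 := hw ⟨i, hi⟩
    have h3 := hYy ⟨i, hi⟩
    simp only [pt] at h1 h2 h3
    rw [h3]
    linarith
  · intro i hi
    have h1 := hYa ⟨i, hi⟩
    have h3 := hYy ⟨i, hi⟩
    simp only [pt] at h1 h3
    rw [← h3] at h1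
    linarith
  · refine le_trans (le_of_eq ?_) hz3
    rw [Finset.sum_add_distrib, ← Finset.mul_sum, ← Fin.sum_univ_eq_sum_range,
      ← Fin.sum_univ_eq_sum_range (fun i => k i (Xf z.1 i, Y (i + 1))), PiLp.inner_apply]
    congr 1
    · refine Finset.sum_congr rfl fun i _ => ?_
      rw [hYy i, hXw i]
      simp
    · simp only [g, pt, hYy]

/-- The mirror image of `discrete_chord_le` under `(x, y, k) ↦ (x, -y, -k)`. -/
theorem le_discrete_chord (N : ℕ) {h : ℝ} (hh : 0 ≤ h) (ξ : ℝ) {k a b : ℕ → ℝ × ℝ → ℝ}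
    {m : ℕ → ℝ} {c L : ℝ} (hL : 0 ≤ L) (hk : ∀ i, Continuous (k i))
    (ha : ∀ i, ContDiff ℝ 1 (a i)) (hb : ∀ i, ContDiff ℝ 1 (b i))
    (haL : ∀ i z, |a i z| ≤ L) (hbL : ∀ i z, |b i z| ≤ L)
    (hkm : ∀ i < N, ∀ z, m i ≤ k i z) (hkc : ∀ i < N, ∀ z, k i z ≤ c)
    (hexp : ∀ i < N, ∀ z d : ℝ × ℝ,
      k i z + a i z * d.1 + b i z * d.2 - L * (d.1 ^ 2 + d.2 ^ 2) ≤ k i (z + d)) :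
    ∃ X Y : ℕ → ℝ, Y 0 = 0 ∧ X N = ξ ∧
      (∀ i < N, X (i + 1) = X i - h * b i (X i, Y (i + 1))) ∧
      (∀ i < N, Y (i + 1) = Y i + h * a i (X i, Y (i + 1))) ∧
      h * ∑ i ∈ Finset.range N, m i
        ≤ ∑ i ∈ Finset.range N, (Y (i + 1) * (X (i + 1) - X i) + h * k i (X i, Y (i + 1))) := by
  obtain ⟨X, Y, hY0, hXN, hX, hY, hS⟩ := discrete_chord_le N hh ξ
    (k := fun i z => -k i (z.1, -z.2)) (a := fun i z => -a i (z.1, -z.2))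
    (b := fun i z => b i (z.1, -z.2)) (m := fun i => -m i) (c := -c) hL
    (fun i => by have := hk i; fun_prop) (fun i => by have := ha i; fun_prop)
    (fun i => by have := hb i; fun_prop) (fun i z => by rw [abs_neg]; exact haL _ _)
    (fun i z => hbL _ _) (fun i hi z => neg_le_neg (hkm i hi _))
    (fun i hi z => neg_le_neg (hkc i hi _)) (fun i hi z d => by
      have h1 := hexp i hi (z.1, -z.2) (d.1, -d.2)
      have h2 : ((z + d).1, -(z + d).2) = (z.1, -z.2) + (d.1, -d.2) := by
        ext <;> simp [add_comm]
      rw [h2]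
      simp only [neg_sq] at h1
      linarith)
  refine ⟨X, fun n => -Y n, by simp [hY0], hXN, hX, fun i hi => ?_, ?_⟩
  · have := hY i hi
    simp only at this ⊢
    linarith
  · have h1 : ∑ i ∈ Finset.range N, (-Y (i + 1) * (X (i + 1) - X i) + h * k i (X i, -Y (i + 1)))
        = -∑ i ∈ Finset.range N, (Y (i + 1) * (X (i + 1) - X i) + h * -k i (X i, -Y (i + 1))) := by
      rw [← Finset.sum_neg_distrib]
      exact Finset.sum_congr rfl fun i _ => by ring
    rw [h1]
    rw [Finset.sum_neg_distrib] at hS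
    simp only at hS
    linarith

end Discrete

/-! ### Uniform bounds for periodic Hamiltonians -/

section Regular

/-- Uniform control of a time-dependent Hamiltonian `k` on the plane with partial derivatives
`a = ∂k/∂x`, `b = ∂k/∂y`: a single constant `L` bounds `k`, `a`, `b`, their Lipschitz constants
in time and space, and the second-order Taylor remainder of `k` in space. -/
structure Regular (k a b : ℝ → ℝ × ℝ → ℝ) (L : ℝ) : Prop where
  nonneg : 0 ≤ L
  cont_k : Continuous fun q : ℝ × ℝ × ℝ => k q.1 q.2
  cont_a : Continuous fun q : ℝ × ℝ × ℝ => a q.1 q.2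
  cont_b : Continuous fun q : ℝ × ℝ × ℝ => b q.1 q.2
  smooth_a : ∀ t, ContDiff ℝ 1 (a t)
  smooth_b : ∀ t, ContDiff ℝ 1 (b t)
  bound_k : ∀ t z, |k t z| ≤ L
  bound_a : ∀ t z, |a t z| ≤ L
  bound_b : ∀ t z, |b t z| ≤ L
  lip_k : ∀ t t' z z', |k t z - k t' z'| ≤ L * (|t - t'| + |z.1 - z'.1| + |z.2 - z'.2|)
  lip_a : ∀ t t' z z', |a t z - a t' z'| ≤ L * (|t - t'| + |z.1 - z'.1| + |z.2 - z'.2|)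
  lip_b : ∀ t t' z z', |b t z - b t' z'| ≤ L * (|t - t'| + |z.1 - z'.1| + |z.2 - z'.2|)
  taylor : ∀ t z d, |k t (z + d) - k t z - a t z * d.1 - b t z * d.2| ≤ L * (d.1 ^ 2 + d.2 ^ 2)

/-- The projection of the time axis onto `[0, 1]`. -/
def clamp (t : ℝ) : ℝ := max 0 (min t 1)

lemma clamp_mem (t : ℝ) : clamp t ∈ Icc (0 : ℝ) 1 :=
  ⟨le_max_left _ _, max_le zero_le_one (min_le_right _ _)⟩

lemma clamp_of_mem {t : ℝ} (ht : t ∈ Icc (0 : ℝ) 1) : clamp t = t := by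
  rw [clamp, min_eq_left ht.2, max_eq_right ht.1]

lemma continuous_clamp : Continuous clamp := by
  unfold clamp
  fun_prop

lemma abs_clamp_sub_le (t t' : ℝ) : |clamp t - clamp t'| ≤ |t - t'| := by
  have h1 := abs_max_sub_max_le_abs (min t 1) (min t' 1) 0
  have h2 := abs_min_sub_min_le_max t 1 t' 1
  rw [max_comm _ (0 : ℝ), max_comm _ (0 : ℝ)] at h1
  refine h1.trans (h2.trans ?_)
  simp

lemma exists_bound_of_periodic {F : Type*} [NormedAddCommGroup F] {G : ℝ × ℝ × ℝ → F}
    (hG : Continuous G) (hper : ∀ q (m n : ℤ), G (q + (0, (m : ℝ), (n : ℝ))) = G q) :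
    ∃ C, 0 ≤ C ∧ ∀ q : ℝ × ℝ × ℝ, q.1 ∈ Icc (0 : ℝ) 1 → ‖G q‖ ≤ C := by
  obtain ⟨C, hC⟩ := ((isCompact_Icc (a := (0 : ℝ)) (b := 1)).prod
    ((isCompact_Icc (a := (0 : ℝ)) (b := 1)).prod
      (isCompact_Icc (a := (0 : ℝ)) (b := 1)))).exists_bound_of_continuousOn hG.continuousOn
  have hmem : ∀ q : ℝ × ℝ × ℝ, q.1 ∈ Icc (0 : ℝ) 1 → ‖G q‖ ≤ C := fun q hq => by
    rw [← hper q (-⌊q.2.1⌋) (-⌊q.2.2⌋)]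
    refine hC _ ⟨by simpa using hq, ?_, ?_⟩
    · simpa [← sub_eq_add_neg, Int.self_sub_floor] using
        (Int.fract_lt_one _).le
    · simpa [← sub_eq_add_neg, Int.self_sub_floor] using
        (Int.fract_lt_one _).le
  exact ⟨C, (norm_nonneg _).trans (hmem (0, 0, 0) (by simp)), hmem⟩

lemma fderiv_periodic {F : Type*} [NormedAddCommGroup F] [NormedSpace ℝ F] {G : ℝ × ℝ × ℝ → F}
    (hper : ∀ q (m n : ℤ), G (q + (0, (m : ℝ), (n : ℝ))) = G q) (q : ℝ × ℝ × ℝ) (m n : ℤ) :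
    fderiv ℝ G (q + (0, (m : ℝ), (n : ℝ))) = fderiv ℝ G q := by
  rw [← fderiv_comp_add_right]
  congr 1
  exact funext fun q => hper q m n

lemma norm_triple_le (q : ℝ × ℝ × ℝ) : ‖q‖ ≤ |q.1| + |q.2.1| + |q.2.2| := by
  rw [Prod.norm_def, Prod.norm_def]
  simp only [Real.norm_eq_abs]
  have := abs_nonneg q.1
  have := abs_nonneg q.2.1
  have := abs_nonneg q.2.2
  refine max_le ?_ (max_le ?_ ?_) <;> linarith

/-- A smooth Hamiltonian that is `ℤ²`-periodic in space is uniformly controlled over the time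
interval `[0, 1]`. Freezing time outside `[0, 1]` makes the control hold for all times. -/
lemma exists_regular {G : ℝ × ℝ × ℝ → ℝ} (hG : ContDiff ℝ (⊤ : ℕ∞) G)
    (hper : ∀ q (m n : ℤ), G (q + (0, (m : ℝ), (n : ℝ))) = G q) :
    ∃ L, Regular (fun t z => G (clamp t, z)) (fun t z => fderiv ℝ G (clamp t, z) (0, 1, 0))
      (fun t z => fderiv ℝ G (clamp t, z) (0, 0, 1)) L := by
  have hD : ContDiff ℝ (⊤ : ℕ∞) (fderiv ℝ G) := hG.fderiv_right (by norm_num)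
  have hGd : Differentiable ℝ G := hG.differentiable (by simp)
  have hDd : Differentiable ℝ (fderiv ℝ G) := hD.differentiable (by simp)
  have hD2 : Continuous (fderiv ℝ (fderiv ℝ G)) := hD.continuous_fderiv (by simp)
  obtain ⟨C₀, hC₀, h₀⟩ := exists_bound_of_periodic hG.continuous hper
  obtain ⟨C₁, hC₁, h₁⟩ := exists_bound_of_periodic hD.continuous (fderiv_periodic hper)
  obtain ⟨C₂, hC₂, h₂⟩ := exists_bound_of_periodic hD2 (fderiv_periodic (fderiv_periodic hper))
  have hS : Convex ℝ {q : ℝ × ℝ × ℝ | q.1 ∈ Icc (0 : ℝ) 1} := by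
    have := (convex_Icc (0 : ℝ) 1).is_linear_preimage (LinearMap.fst ℝ ℝ (ℝ × ℝ)).isLinear
    exact this
  have hlipG : ∀ q q' : ℝ × ℝ × ℝ, q.1 ∈ Icc (0 : ℝ) 1 → q'.1 ∈ Icc (0 : ℝ) 1 →
      ‖G q - G q'‖ ≤ C₁ * ‖q - q'‖ := fun q q' hq hq' =>
    hS.norm_image_sub_le_of_norm_fderiv_le (fun p _ => hGd p) (fun p hp => h₁ p hp) hq' hq
  have hlipD : ∀ q q' : ℝ × ℝ × ℝ, q.1 ∈ Icc (0 : ℝ) 1 → q'.1 ∈ Icc (0 : ℝ) 1 →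
      ‖fderiv ℝ G q - fderiv ℝ G q'‖ ≤ C₂ * ‖q - q'‖ := fun q q' hq hq' =>
    hS.norm_image_sub_le_of_norm_fderiv_le (fun p _ => hDd p) (fun p hp => h₂ p hp) hq' hq
  have hdist : ∀ t t' (z z' : ℝ × ℝ), ‖((clamp t, z) - (clamp t', z') : ℝ × ℝ × ℝ)‖
      ≤ |t - t'| + |z.1 - z'.1| + |z.2 - z'.2| := fun t t' z z' => by
    refine (norm_triple_le _).trans ?_
    have := abs_clamp_sub_le t t'
    simp only [Prod.fst_sub, Prod.snd_sub]
    linarith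
  have hv1 : ‖((0, 1, 0) : ℝ × ℝ × ℝ)‖ = 1 := by simp [Prod.norm_def]
  have hv2 : ‖((0, 0, 1) : ℝ × ℝ × ℝ)‖ = 1 := by simp [Prod.norm_def]
  have hin : ∀ t (z : ℝ × ℝ), (((clamp t, z) : ℝ × ℝ × ℝ)).1 ∈ Icc (0 : ℝ) 1 :=
    fun t z => clamp_mem t
  have hbd : ∀ t (z : ℝ × ℝ) (v : ℝ × ℝ × ℝ), ‖v‖ = 1 →
      |fderiv ℝ G (clamp t, z) v| ≤ C₀ + C₁ + C₂ := fun t z v hv => by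
    have h3 := (fderiv ℝ G (clamp t, z)).le_opNorm v
    rw [hv, mul_one] at h3
    have h4 := h₁ _ (hin t z)
    rw [← Real.norm_eq_abs]
    linarith
  have hlp : ∀ t t' (z z' : ℝ × ℝ) (v : ℝ × ℝ × ℝ), ‖v‖ = 1 →
      |fderiv ℝ G (clamp t, z) v - fderiv ℝ G (clamp t', z') v|
        ≤ (C₀ + C₁ + C₂) * (|t - t'| + |z.1 - z'.1| + |z.2 - z'.2|) := fun t t' z z' v hv => by
    have h3 := (fderiv ℝ G (clamp t, z) - fderiv ℝ G (clamp t', z')).le_opNorm v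
    rw [hv, mul_one] at h3
    refine h3.trans ((hlipD _ _ (hin t z) (hin t' z')).trans ?_)
    exact mul_le_mul (by linarith) (hdist t t' z z') (norm_nonneg _) (by linarith)
  have hcont : Continuous fun q : ℝ × ℝ × ℝ => ((clamp q.1, q.2) : ℝ × ℝ × ℝ) :=
    (continuous_clamp.comp continuous_fst).prodMk continuous_snd
  have hcD : ∀ v : ℝ × ℝ × ℝ,
      Continuous fun q : ℝ × ℝ × ℝ => fderiv ℝ G (clamp q.1, q.2) v := fun v =>
    (hD.continuous.comp hcont).clm_apply continuous_const
  have hsD : ∀ (v : ℝ × ℝ × ℝ) t, ContDiff ℝ 1 fun z : ℝ × ℝ => fderiv ℝ G (clamp t, z) v :=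
    fun v t => (((hD.of_le (by norm_cast)).comp
      (contDiff_const.prodMk contDiff_id)).clm_apply contDiff_const)
  refine ⟨C₀ + C₁ + C₂, by positivity, hG.continuous.comp hcont, hcD _, hcD _, hsD _, hsD _,
    fun t z => ?_, fun t z => hbd t z _ hv1, fun t z => hbd t z _ hv2, fun t t' z z' => ?_,
    fun t t' z z' => hlp t t' z z' _ hv1, fun t t' z z' => hlp t t' z z' _ hv2, fun t z d => ?_⟩
  · have := h₀ _ (hin t z)
    rw [← Real.norm_eq_abs]
    linarith
  · refine (hlipG _ _ (hin t z) (hin t' z')).trans ?_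
    exact mul_le_mul (by linarith) (hdist t t' z z') (norm_nonneg _) (by linarith)
  · have hconv := hS.inter (convex_closedBall ((clamp t, z) : ℝ × ℝ × ℝ) ‖((0, d) : ℝ × ℝ × ℝ)‖)
    have h3 := hconv.norm_image_sub_le_of_norm_hasFDerivWithin_le'
      (f := G) (f' := fderiv ℝ G) (φ := fderiv ℝ G (clamp t, z))
      (C := C₂ * ‖((0, d) : ℝ × ℝ × ℝ)‖) (x := (clamp t, z)) (y := (clamp t, z + d))
      (fun p _ => (hGd p).hasFDerivAt.hasFDerivWithinAt)
      (fun p hp => (hlipD _ _ hp.1 (hin t z)).trans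
        (mul_le_mul_of_nonneg_left (mem_closedBall_iff_norm.1 hp.2) hC₂))
      ⟨hin t z, by simp⟩ ⟨hin t _, by rw [mem_closedBall_iff_norm]; simp⟩
    have h4 : ((clamp t, z + d) - (clamp t, z) : ℝ × ℝ × ℝ) = (0, d) := by simp
    have h5 : ((0, d) : ℝ × ℝ × ℝ) = d.1 • (0, 1, 0) + d.2 • (0, 0, 1) := by
      ext <;> simp
    have h6 : ‖((0, d) : ℝ × ℝ × ℝ)‖ ^ 2 ≤ d.1 ^ 2 + d.2 ^ 2 := by
      have : ‖((0, d) : ℝ × ℝ × ℝ)‖ = max |d.1| |d.2| := by simp [Prod.norm_def]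
      rw [this]
      rcases max_choice |d.1| |d.2| with h | h <;> rw [h, sq_abs] <;> nlinarith
    rw [h4] at h3
    have h7 : fderiv ℝ G (clamp t, z) (0, d) = fderiv ℝ G (clamp t, z) (0, 1, 0) * d.1
        + fderiv ℝ G (clamp t, z) (0, 0, 1) * d.2 := by
      rw [h5, map_add, map_smul, map_smul, smul_eq_mul, smul_eq_mul, mul_comm, mul_comm d.2]
    rw [h7, Real.norm_eq_abs, ← sub_sub, mul_assoc, ← sq] at h3
    refine h3.trans (mul_le_mul (by linarith) h6 (by positivity) (by linarith))

end Regular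

/-! ### Convergence of the Euler scheme -/

section Euler

/-- Convergence of a perturbed Euler scheme with step `1 / N` on `[0, 1]`, with an error constant
that does not depend on `N`. -/
lemma euler_error {E : Type*} [NormedAddCommGroup E] [NormedSpace ℝ E] {C : ℝ} (hC : 0 ≤ C)
    {N : ℕ} (hN : 0 < N) {U U' : ℝ → E} {u v : ℕ → E}
    (hU : ∀ t ∈ Icc (0 : ℝ) 1, HasDerivAt U (U' t) t)
    (hU' : ∀ t ∈ Icc (0 : ℝ) 1, ∀ t' ∈ Icc (0 : ℝ) 1, ‖U' t - U' t'‖ ≤ C * |t - t'|)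
    (h0 : u 0 = U 0) (hu : ∀ i < N, u (i + 1) = u i + (N : ℝ)⁻¹ • v i)
    (hv : ∀ i < N, ‖v i - U' (i * (N : ℝ)⁻¹)‖ ≤ C * (‖u i - U (i * (N : ℝ)⁻¹)‖ + (N : ℝ)⁻¹)) :
    ∀ i ≤ N, ‖u i - U (i * (N : ℝ)⁻¹)‖ ≤ 2 * Real.exp C * (N : ℝ)⁻¹ := by
  set h : ℝ := (N : ℝ)⁻¹ with hh
  have hN' : (0 : ℝ) < N := Nat.cast_pos.2 hN
  have hpos : 0 < h := inv_pos.2 hN'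
  have hmem : ∀ i ≤ N, (i : ℝ) * h ∈ Icc (0 : ℝ) 1 := fun i hi =>
    ⟨by positivity, by
      rw [hh, ← div_eq_mul_inv]
      exact (div_le_one hN').2 (Nat.cast_le.2 hi)⟩
  have hstep : ∀ i < N, ‖U ((i + 1 : ℕ) * h) - U (i * h) - h • U' (i * h)‖ ≤ C * h ^ 2 := by
    intro i hi
    have h1 := hmem i hi.le
    have h2 := hmem (i + 1) hi
    have h3 : ((i + 1 : ℕ) : ℝ) * h - i * h = h := by push_cast; ring
    have hconv := convex_Icc (𝕜 := ℝ) ((i : ℝ) * h) (((i + 1 : ℕ) : ℝ) * h)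
    have h4 := hconv.norm_image_sub_le_of_norm_hasDerivWithin_le
      (f := fun t => U t - t • U' (i * h)) (f' := fun t => U' t - U' (i * h)) (C := C * h)
      (x := i * h) (y := (i + 1 : ℕ) * h)
      (fun t ht => by
        have := (hU t ⟨h1.1.trans ht.1, ht.2.trans h2.2⟩).sub
          ((hasDerivAt_id t).smul_const (U' (i * h)))
        rw [one_smul] at this
        exact this.hasDerivWithinAt)
      (fun t ht => (hU' t ⟨h1.1.trans ht.1, ht.2.trans h2.2⟩ _ h1).trans
        (mul_le_mul_of_nonneg_left (by
          rw [abs_of_nonneg (by linarith [ht.1])]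
          linarith [ht.2]) hC))
      ⟨le_rfl, by linarith⟩ ⟨by linarith, le_rfl⟩
    rw [h3, Real.norm_eq_abs, abs_of_pos hpos] at h4
    have h5 : U ((i + 1 : ℕ) * h) - ((i + 1 : ℕ) * h) • U' (i * h)
          - (U (i * h) - ((i : ℝ) * h) • U' (i * h))
        = U ((i + 1 : ℕ) * h) - U (i * h) - h • U' (i * h) := by
      rw [show ((i + 1 : ℕ) : ℝ) * h = i * h + h by linarith, add_smul]
      abel
    rw [h5] at h4
    linarith [h4]
  have hrec : ∀ i ≤ N, ‖u i - U (i * h)‖ + 2 * h ≤ (1 + h * C) ^ i * (2 * h) := by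
    intro i
    induction i with
    | zero => intro _; simp [h0]
    | succ i ih =>
      intro hi
      have h1 := ih (Nat.le_of_succ_le hi)
      have h2 : u (i + 1) - U ((i + 1 : ℕ) * h) = (u i - U (i * h)) + h • (v i - U' (i * h))
          - (U ((i + 1 : ℕ) * h) - U (i * h) - h • U' (i * h)) := by
        rw [hu i hi, smul_sub]; abel
      have h3 : ‖u (i + 1) - U ((i + 1 : ℕ) * h)‖ ≤ ‖u i - U (i * h)‖
          + h * (C * (‖u i - U (i * h)‖ + h)) + C * h ^ 2 := by
        rw [h2]
        refine (norm_sub_le _ _).trans (add_le_add ((norm_add_le _ _).trans ?_) (hstep i hi))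
        rw [norm_smul, Real.norm_eq_abs, abs_of_pos hpos]
        have := mul_le_mul_of_nonneg_left (hv i hi) hpos.le
        linarith
      rw [pow_succ]
      have h4 := mul_le_mul_of_nonneg_left h1 (show 0 ≤ 1 + h * C by positivity)
      linarith
  intro i hi
  have h1 := hrec i hi
  have h2 : (1 + h * C) ^ i ≤ Real.exp C := by
    have h3 : 1 + h * C ≤ Real.exp (h * C) := by linarith [Real.add_one_le_exp (h * C)]
    refine (pow_le_pow_left₀ (by positivity) h3 i).trans ?_
    rw [← Real.exp_nat_mul, ← mul_assoc]
    exact Real.exp_le_exp.2 (mul_le_of_le_one_left hC (hmem i hi).2)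
  have h3 := mul_le_mul_of_nonneg_right h2 (show 0 ≤ 2 * h by positivity)
  linarith

/-- Left Riemann sums of a Lipschitz function converge to the integral with rate `1 / N`. -/
lemma riemann_sum_error {C : ℝ} (hC : 0 ≤ C) {m : ℝ → ℝ} (hm : ∀ t t', |m t - m t'| ≤ C * |t - t'|)
    {N : ℕ} (hN : 0 < N) :
    |(N : ℝ)⁻¹ * ∑ i ∈ Finset.range N, m (i * (N : ℝ)⁻¹) - ∫ t in (0 : ℝ)..1, m t|
      ≤ 2 * Real.exp C * (N : ℝ)⁻¹ := by
  have hcont : Continuous m :=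
    (LipschitzWith.of_dist_le_mul (K := ⟨C, hC⟩) fun t t' => hm t t').continuous
  have h1 := euler_error hC hN (U := fun t => ∫ τ in (0 : ℝ)..t, m τ) (U' := m)
    (u := fun n => (N : ℝ)⁻¹ * ∑ i ∈ Finset.range n, m (i * (N : ℝ)⁻¹))
    (v := fun i => m (i * (N : ℝ)⁻¹))
    (fun t _ => intervalIntegral.integral_hasDerivAt_right (hcont.intervalIntegrable _ _)
      hcont.stronglyMeasurable.stronglyMeasurableAtFilter hcont.continuousAt)
    (fun t _ t' _ => hm t t') (by simp)
    (fun i _ => by rw [Finset.sum_range_succ, mul_add, smul_eq_mul])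
    (fun i _ => by simp only [sub_self, norm_zero]; positivity) N le_rfl
  rw [mul_inv_cancel₀ (Nat.cast_pos.2 hN).ne'] at h1
  exact h1

/-- An orbit `(x, y)` over `[0, 1]` of Hamilton's equations `x' = -b`, `y' = a` that starts on the
line `y = 0`. -/
structure IsOrbit (a b : ℝ → ℝ × ℝ → ℝ) (x y : ℝ → ℝ) : Prop where
  cont_x : Continuous x
  cont_y : Continuous y
  init : y 0 = 0
  deriv_x : ∀ t ∈ Icc (0 : ℝ) 1, HasDerivAt x (-b t (x t, y t)) t
  deriv_y : ∀ t ∈ Icc (0 : ℝ) 1, HasDerivAt y (a t (x t, y t)) t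

/-- The action `∫₀¹ (k + y x') dt` of an orbit, with `x' = -b` substituted. -/
def action (k b : ℝ → ℝ × ℝ → ℝ) (x y : ℝ → ℝ) : ℝ :=
  ∫ t in (0 : ℝ)..1, (k t (x t, y t) - y t * b t (x t, y t))

variable {k a b : ℝ → ℝ × ℝ → ℝ} {L : ℝ}

lemma abs_sub_le_of_deriv {g g' : ℝ → ℝ} (hg : ∀ t ∈ Icc (0 : ℝ) 1, HasDerivAt g (g' t) t)
    (hg' : ∀ t ∈ Icc (0 : ℝ) 1, |g' t| ≤ L) :
    ∀ t ∈ Icc (0 : ℝ) 1, ∀ t' ∈ Icc (0 : ℝ) 1, |g t - g t'| ≤ L * |t - t'| :=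
  fun _ ht _ ht' => (convex_Icc (0 : ℝ) 1).norm_image_sub_le_of_norm_hasDerivWithin_le
    (fun t ht => (hg t ht).hasDerivWithinAt) hg' ht' ht

lemma IsOrbit.abs_y_le (hR : Regular k a b L) {x y : ℝ → ℝ} (ho : IsOrbit a b x y) :
    ∀ t ∈ Icc (0 : ℝ) 1, |y t| ≤ L := fun t ht => by
  have h1 := abs_sub_le_of_deriv ho.deriv_y (fun t _ => hR.bound_a t _) t ht 0 (by simp)
  rw [ho.init, sub_zero, sub_zero, abs_of_nonneg ht.1] at h1
  nlinarith [ht.2, hR.nonneg]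

/-- The Lipschitz estimate for the vector field of Hamilton's equations augmented by the
integrand of the action, in the region `|y| ≤ L`. -/
lemma Regular.lip_field (hR : Regular k a b L) {t t' : ℝ} {z z' : ℝ × ℝ} (hz : |z'.2| ≤ L) :
    ‖((-b t z, a t z, k t z - z.2 * b t z) - (-b t' z', a t' z', k t' z' - z'.2 * b t' z') :
      ℝ × ℝ × ℝ)‖ ≤ (2 * L + L ^ 2) * (|t - t'| + |z.1 - z'.1| + |z.2 - z'.2|) := by
  have hL := hR.nonneg
  set D := |t - t'| + |z.1 - z'.1| + |z.2 - z'.2| with hD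
  have hD0 : 0 ≤ D := by positivity
  have h1 := hR.lip_k t t' z z'
  have h2 := hR.lip_a t t' z z'
  have h3 := hR.lip_b t t' z z'
  rw [← hD] at h1 h2 h3
  have h4 : 0 ≤ L * D := by positivity
  have h5 : 0 ≤ L ^ 2 * D := by positivity
  have h6 : |k t z - z.2 * b t z - (k t' z' - z'.2 * b t' z')| ≤ L * D + (L * D + L * (L * D)) := by
    have h7 : k t z - z.2 * b t z - (k t' z' - z'.2 * b t' z')
        = (k t z - k t' z') - ((z.2 - z'.2) * b t z + z'.2 * (b t z - b t' z')) := by ring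
    rw [h7]
    refine (abs_sub _ _).trans (add_le_add h1 ((abs_add_le _ _).trans (add_le_add ?_ ?_)))
    · rw [abs_mul, mul_comm]
      refine mul_le_mul (hR.bound_b t z) ?_ (abs_nonneg _) hL
      rw [hD]
      linarith [abs_nonneg (t - t'), abs_nonneg (z.1 - z'.1)]
    · rw [abs_mul]
      exact mul_le_mul hz h3 (abs_nonneg _) hL
  rw [Prod.norm_def, Prod.norm_def]
  simp only [Prod.fst_sub, Prod.snd_sub, Real.norm_eq_abs]
  refine max_le ?_ (max_le ?_ ?_)
  · rw [neg_sub_neg, abs_sub_comm]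
    linarith
  · linarith
  · linarith

/-- A discrete trajectory of Hamilton's equations with step `1 / N` stays within `C / N` of the
true orbit with the same initial point, and so does its discrete action. -/
lemma discrete_error (hR : Regular k a b L) : ∃ C : ℝ, ∀ {N : ℕ}, 0 < N → ∀ {x y : ℝ → ℝ},
    IsOrbit a b x y → ∀ {X Y : ℕ → ℝ}, X 0 = x 0 → Y 0 = 0 →
    (∀ i < N, X (i + 1) = X i - (N : ℝ)⁻¹ * b (i * (N : ℝ)⁻¹) (X i, Y (i + 1))) →
    (∀ i < N, Y (i + 1) = Y i + (N : ℝ)⁻¹ * a (i * (N : ℝ)⁻¹) (X i, Y (i + 1))) →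
    |X N - x 1| ≤ C * (N : ℝ)⁻¹ ∧
    |∑ i ∈ Finset.range N, (Y (i + 1) * (X (i + 1) - X i)
        + (N : ℝ)⁻¹ * k (i * (N : ℝ)⁻¹) (X i, Y (i + 1))) - action k b x y| ≤ C * (N : ℝ)⁻¹ := by
  have hL := hR.nonneg
  set C₀ := 2 * L + L ^ 2 with hC₀
  have hC₀0 : 0 ≤ C₀ := by positivity
  refine ⟨2 * Real.exp (C₀ * (2 + 2 * L)), fun {N} hN {x y} ho {X Y} hX0 hY0 hX hY => ?_⟩
  have hN' : (0 : ℝ) < N := Nat.cast_pos.2 hN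
  set h : ℝ := (N : ℝ)⁻¹ with hh
  have hpos : 0 < h := inv_pos.2 hN'
  have hInt : Continuous fun t => k t (x t, y t) - y t * b t (x t, y t) := by
    have hz : Continuous fun t => (t, x t, y t) :=
      continuous_id.prodMk (ho.cont_x.prodMk ho.cont_y)
    exact (hR.cont_k.comp hz).sub (ho.cont_y.mul (hR.cont_b.comp hz))
  have hx := abs_sub_le_of_deriv ho.deriv_x (fun t _ => by rw [abs_neg]; exact hR.bound_b t _)
  have hy := abs_sub_le_of_deriv ho.deriv_y (fun t _ => hR.bound_a t _)
  have hmem : ∀ i ≤ N, (i : ℝ) * h ∈ Icc (0 : ℝ) 1 := fun i hi =>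
    ⟨by positivity, by
      rw [hh, ← div_eq_mul_inv]
      exact (div_le_one hN').2 (Nat.cast_le.2 hi)⟩
  have key := euler_error (C := C₀ * (2 + 2 * L)) (by positivity) hN
    (U := fun t => ((x t, y t, ∫ τ in (0 : ℝ)..t, (k τ (x τ, y τ) - y τ * b τ (x τ, y τ))) :
      ℝ × ℝ × ℝ))
    (U' := fun t => ((-b t (x t, y t), a t (x t, y t),
      k t (x t, y t) - y t * b t (x t, y t)) : ℝ × ℝ × ℝ))
    (u := fun n => ((X n, Y n, ∑ i ∈ Finset.range n, (Y (i + 1) * (X (i + 1) - X i)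
      + h * k (i * h) (X i, Y (i + 1)))) : ℝ × ℝ × ℝ))
    (v := fun i => ((-b (i * h) (X i, Y (i + 1)), a (i * h) (X i, Y (i + 1)),
      k (i * h) (X i, Y (i + 1)) - Y (i + 1) * b (i * h) (X i, Y (i + 1))) : ℝ × ℝ × ℝ))
    (fun t ht => (ho.deriv_x t ht).prodMk ((ho.deriv_y t ht).prodMk
      (intervalIntegral.integral_hasDerivAt_right (hInt.intervalIntegrable _ _)
        hInt.stronglyMeasurable.stronglyMeasurableAtFilter hInt.continuousAt)))
    (fun t ht t' ht' => by
      refine (hR.lip_field (z := (x t, y t)) (z' := (x t', y t'))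
        (ho.abs_y_le hR t' ht')).trans ?_
      rw [← hC₀, mul_assoc]
      refine mul_le_mul_of_nonneg_left ?_ hC₀0
      have h1 := hx t ht t' ht'
      have h2 := hy t ht t' ht'
      have h3 := abs_nonneg (t - t')
      simp only
      linarith)
    (by simp [hX0, hY0, ho.init])
    (fun i hi => by
      ext
      · simp only [Prod.fst_add, Prod.smul_fst, smul_eq_mul]
        rw [hX i hi]
        ring
      · simp only [Prod.snd_add, Prod.fst_add, Prod.smul_fst, Prod.smul_snd, smul_eq_mul]
        exact hY i hi
      · simp only [Prod.snd_add, Prod.smul_snd, smul_eq_mul]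
        rw [Finset.sum_range_succ, hX i hi]
        ring)
    (fun i hi => by
      refine (hR.lip_field (z := (X i, Y (i + 1))) (z' := (x (i * h), y (i * h)))
        (ho.abs_y_le hR _ (hmem i hi.le))).trans ?_
      rw [← hC₀, mul_assoc]
      refine mul_le_mul_of_nonneg_left ?_ hC₀0
      set e := ‖(((X i, Y i, ∑ i ∈ Finset.range i, (Y (i + 1) * (X (i + 1) - X i)
          + h * k (i * h) (X i, Y (i + 1)))) : ℝ × ℝ × ℝ)
        - (x (i * h), y (i * h), ∫ τ in (0 : ℝ)..(i * h), (k τ (x τ, y τ)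
          - y τ * b τ (x τ, y τ))))‖ with he
      have hproj : ∀ p p' : ℝ × ℝ × ℝ, |p.1 - p'.1| ≤ ‖p - p'‖ ∧ |p.2.1 - p'.2.1| ≤ ‖p - p'‖ :=
        fun p p' => ⟨norm_fst_le (p - p'), (norm_fst_le (p - p').2).trans (norm_snd_le (p - p'))⟩
      obtain ⟨h1, h2⟩ := hproj (X i, Y i, ∑ i ∈ Finset.range i, (Y (i + 1) * (X (i + 1) - X i)
          + h * k (i * h) (X i, Y (i + 1))))
        (x (i * h), y (i * h), ∫ τ in (0 : ℝ)..(i * h), (k τ (x τ, y τ) - y τ * b τ (x τ, y τ)))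
      rw [← he] at h1 h2
      simp only at h1 h2
      have h3 : |Y (i + 1) - y (i * h)| ≤ e + h * L := by
        rw [hY i hi, add_sub_right_comm]
        refine (abs_add_le _ _).trans (add_le_add h2 ?_)
        rw [abs_mul, abs_of_pos hpos]
        exact mul_le_mul_of_nonneg_left (hR.bound_a _ _) hpos.le
      have h4 : 0 ≤ e := norm_nonneg _
      rw [sub_self, abs_zero]
      simp only
      nlinarith [mul_nonneg hL h4, mul_nonneg hL hpos.le])
    N le_rfl
  rw [← hh, hh, mul_inv_cancel₀ hN'.ne', ← hh] at key
  constructor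
  · exact (norm_fst_le _).trans key
  · exact (norm_snd_le _).trans ((norm_snd_le _).trans key)

end Euler

/-! ### Bounds and first variation of the action -/

section ActionBounds

variable {k a b : ℝ → ℝ × ℝ → ℝ} {L : ℝ}

lemma le_of_approx {A : ℝ → ℝ} (hA : Continuous A) {s M C C' : ℝ}
    (h : ∀ N : ℕ, 0 < N → ∃ r, |s - r| ≤ C * (N : ℝ)⁻¹ ∧ A r ≤ M + C' * (N : ℝ)⁻¹) : A s ≤ M := by
  choose r hr1 hr2 using fun N : ℕ => h (N + 1) N.succ_pos
  have hinv : Filter.Tendsto (fun N : ℕ => ((N + 1 : ℕ) : ℝ)⁻¹) Filter.atTop (nhds 0) :=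
    tendsto_inv_atTop_nhds_zero_nat.comp (Filter.tendsto_add_atTop_nat 1)
  have hr : Filter.Tendsto r Filter.atTop (nhds s) := by
    rw [tendsto_iff_dist_tendsto_zero]
    refine squeeze_zero (fun _ => dist_nonneg) (fun N => ?_) (by simpa using hinv.const_mul C)
    rw [dist_comm]
    simpa [Real.dist_eq] using hr1 N
  refine le_of_tendsto_of_tendsto ((hA.tendsto s).comp hr)
    (by simpa using (hinv.const_mul C').const_add M) (Filter.Eventually.of_forall hr2)

variable {x y : ℝ → ℝ → ℝ} {c : ℝ}

/-- If the time-one map sends the line `y = 0` to a curve over the `x`-axis by a translation of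
the `x`-coordinate, then the action of each orbit from this line is at most `∫₀¹ max k`. -/
lemma action_le (hR : Regular k a b L) (ho : ∀ s, IsOrbit a b (x s) (y s)) (h0 : ∀ s, x s 0 = s)
    (h1 : ∀ s, x s 1 = s + c) (hA : Continuous fun s => action k b (x s) (y s)) {m : ℝ → ℝ}
    (hm : ∀ t t', |m t - m t'| ≤ L * |t - t'|) (hkm : ∀ t z, k t z ≤ m t) (s : ℝ) :
    action k b (x s) (y s) ≤ ∫ t in (0 : ℝ)..1, m t := by
  obtain ⟨C, hC⟩ := discrete_error hR
  refine le_of_approx hA (C := C) (C' := 2 * Real.exp L + C) fun N hN => ?_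
  obtain ⟨X, Y, hY0, hXN, hX, hY, hS⟩ := discrete_chord_le N (h := (N : ℝ)⁻¹) (by positivity)
    (s + c) (k := fun i => k (i * (N : ℝ)⁻¹)) (a := fun i => a (i * (N : ℝ)⁻¹))
    (b := fun i => b (i * (N : ℝ)⁻¹)) (m := fun i => m (i * (N : ℝ)⁻¹)) (c := -L) hR.nonneg
    (fun i => hR.cont_k.comp (continuous_const.prodMk continuous_id)) (fun i => hR.smooth_a _)
    (fun i => hR.smooth_b _) (fun i z => hR.bound_a _ z) (fun i z => hR.bound_b _ z)
    (fun i _ z => hkm _ z) (fun i _ z => (abs_le.1 (hR.bound_k _ z)).1)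
    (fun i _ z d => by
      have := (abs_le.1 (hR.taylor (i * (N : ℝ)⁻¹) z d)).2
      linarith)
  obtain ⟨hr1, hr2⟩ := hC hN (ho (X 0)) (h0 (X 0)).symm hY0 hX hY
  rw [hXN, h1, add_sub_add_right_eq_sub] at hr1
  refine ⟨X 0, hr1, ?_⟩
  have h2 := (abs_le.1 (riemann_sum_error hR.nonneg hm hN)).2
  have h3 := (abs_le.1 hr2).1
  linarith

/-- The mirror image of `action_le`: the action is at least `∫₀¹ min k`. -/
lemma le_action (hR : Regular k a b L) (ho : ∀ s, IsOrbit a b (x s) (y s)) (h0 : ∀ s, x s 0 = s)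
    (h1 : ∀ s, x s 1 = s + c) (hA : Continuous fun s => action k b (x s) (y s)) {m : ℝ → ℝ}
    (hm : ∀ t t', |m t - m t'| ≤ L * |t - t'|) (hkm : ∀ t z, m t ≤ k t z) (s : ℝ) :
    ∫ t in (0 : ℝ)..1, m t ≤ action k b (x s) (y s) := by
  obtain ⟨C, hC⟩ := discrete_error hR
  rw [← neg_le_neg_iff]
  refine le_of_approx (A := fun s => -action k b (x s) (y s)) hA.neg (C := C)
    (C' := 2 * Real.exp L + C) fun N hN => ?_
  obtain ⟨X, Y, hY0, hXN, hX, hY, hS⟩ := le_discrete_chord N (h := (N : ℝ)⁻¹) (by positivity)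
    (s + c) (k := fun i => k (i * (N : ℝ)⁻¹)) (a := fun i => a (i * (N : ℝ)⁻¹))
    (b := fun i => b (i * (N : ℝ)⁻¹)) (m := fun i => m (i * (N : ℝ)⁻¹)) (c := L) hR.nonneg
    (fun i => hR.cont_k.comp (continuous_const.prodMk continuous_id)) (fun i => hR.smooth_a _)
    (fun i => hR.smooth_b _) (fun i z => hR.bound_a _ z) (fun i z => hR.bound_b _ z)
    (fun i _ z => hkm _ z) (fun i _ z => (abs_le.1 (hR.bound_k _ z)).2)
    (fun i _ z d => by
      have := (abs_le.1 (hR.taylor (i * (N : ℝ)⁻¹) z d)).1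
      linarith)
  obtain ⟨hr1, hr2⟩ := hC hN (ho (X 0)) (h0 (X 0)).symm hY0 hX hY
  rw [hXN, h1, add_sub_add_right_eq_sub] at hr1
  refine ⟨X 0, hr1, ?_⟩
  have h2 := (abs_le.1 (riemann_sum_error hR.nonneg hm hN)).1
  have h3 := (abs_le.1 hr2).2
  linarith

end ActionBounds

section ActionDerivative

variable {k a b : ℝ → ℝ × ℝ → ℝ} {L : ℝ}

lemma abs_add_abs_le_two_mul_norm (z : ℝ × ℝ) : |z.1| + |z.2| ≤ 2 * ‖z‖ := by
  have h1 := norm_fst_le z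
  have h2 := norm_snd_le z
  rw [Real.norm_eq_abs] at h1 h2
  linarith

/-- Orbits depend on their initial point in a Lipschitz way. -/
lemma IsOrbit.dist_le (hR : Regular k a b L) {x y x' y' : ℝ → ℝ} (ho : IsOrbit a b x y)
    (ho' : IsOrbit a b x' y') : ∀ t ∈ Icc (0 : ℝ) 1,
      |x' t - x t| + |y' t - y t| ≤ 2 * Real.exp (2 * L) * |x' 0 - x 0| := fun t ht => by
  have hcoe : ((2 * L).toNNReal : ℝ) = 2 * L :=
    Real.coe_toNNReal _ (mul_nonneg zero_le_two hR.nonneg)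
  have hlip : ∀ t, LipschitzWith (2 * L).toNNReal
      (fun z : ℝ × ℝ => ((-b t z, a t z) : ℝ × ℝ)) := fun t =>
    LipschitzWith.of_dist_le_mul fun z z' => by
      have h1 := hR.lip_a t t z z'
      have h2 := hR.lip_b t t z z'
      have h3 := mul_le_mul_of_nonneg_left (abs_add_abs_le_two_mul_norm (z - z')) hR.nonneg
      rw [sub_self, abs_zero, zero_add] at h1 h2
      rw [hcoe, dist_eq_norm, dist_eq_norm, Prod.norm_def]
      simp only [Prod.fst_sub, Prod.snd_sub, Real.norm_eq_abs] at h3 ⊢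
      refine max_le ?_ ?_
      · rw [neg_sub_neg, abs_sub_comm]
        linarith
      · linarith
  have h1 := dist_le_of_trajectories_ODE (fun t => hlip t)
    (f := fun t => ((x' t, y' t) : ℝ × ℝ)) (g := fun t => ((x t, y t) : ℝ × ℝ)) (a := 0) (b := 1)
    (ho'.cont_x.prodMk ho'.cont_y).continuousOn
    (fun t ht => ((ho'.deriv_x t (Ico_subset_Icc_self ht)).prodMk
      (ho'.deriv_y t (Ico_subset_Icc_self ht))).hasDerivWithinAt)
    (ho.cont_x.prodMk ho.cont_y).continuousOn
    (fun t ht => ((ho.deriv_x t (Ico_subset_Icc_self ht)).prodMk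
      (ho.deriv_y t (Ico_subset_Icc_self ht))).hasDerivWithinAt) le_rfl t ht
  have h2 : dist ((x' 0, y' 0) : ℝ × ℝ) (x 0, y 0) = |x' 0 - x 0| := by
    simp [dist_eq_norm, Prod.norm_def, ho.init, ho'.init]
  have h3 : Real.exp (2 * L * (t - 0)) ≤ Real.exp (2 * L) :=
    Real.exp_le_exp.2 (by nlinarith [ht.2, hR.nonneg])
  have h4 := abs_add_abs_le_two_mul_norm (((x' t, y' t) : ℝ × ℝ) - (x t, y t))
  rw [← dist_eq_norm] at h4
  rw [h2, hcoe] at h1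
  have h5 := mul_le_mul_of_nonneg_left h3 (abs_nonneg (x' 0 - x 0))
  simp only [Prod.fst_sub, Prod.snd_sub] at h1 h4
  linarith

lemma IsOrbit.continuous_integrand (hR : Regular k a b L) {x y : ℝ → ℝ} (ho : IsOrbit a b x y) :
    Continuous fun t => k t (x t, y t) - y t * b t (x t, y t) := by
  have hz : Continuous fun t => (t, x t, y t) :=
    continuous_id.prodMk (ho.cont_x.prodMk ho.cont_y)
  exact (hR.cont_k.comp hz).sub (ho.cont_y.mul (hR.cont_b.comp hz))

/-- The first variation formula: to first order, moving an orbit within those starting on `y = 0`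
changes the action by the boundary term `y(1) δx(1)` only, with a uniform quadratic remainder. -/
lemma action_expansion (hR : Regular k a b L) : ∃ C, ∀ {x y x' y' : ℝ → ℝ}, IsOrbit a b x y →
    IsOrbit a b x' y' → |action k b x' y' - action k b x y - y 1 * (x' 1 - x 1)|
      ≤ C * (x' 0 - x 0) ^ 2 := by
  have hL := hR.nonneg
  refine ⟨2 * L * (2 * Real.exp (2 * L)) ^ 2, fun {x y x' y'} ho ho' => ?_⟩
  have hz : Continuous fun t => (t, x t, y t) :=
    continuous_id.prodMk (ho.cont_x.prodMk ho.cont_y)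
  have hz' : Continuous fun t => (t, x' t, y' t) :=
    continuous_id.prodMk (ho'.cont_x.prodMk ho'.cont_y)
  -- the time derivative of `y δx` along the pair of orbits
  set g : ℝ → ℝ := fun t => a t (x t, y t) * (x' t - x t)
    + y t * (-b t (x' t, y' t) - -b t (x t, y t)) with hg
  have hgc : Continuous g :=
    ((hR.cont_a.comp hz).mul (ho'.cont_x.sub ho.cont_x)).add
      (ho.cont_y.mul ((hR.cont_b.comp hz').neg.sub (hR.cont_b.comp hz).neg))
  have hFTC : ∫ t in (0 : ℝ)..1, g t = y 1 * (x' 1 - x 1) := by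
    rw [intervalIntegral.integral_eq_sub_of_hasDerivAt (f := fun t => y t * (x' t - x t))
      (fun t ht => by
        rw [uIcc_of_le zero_le_one] at ht
        exact (ho.deriv_y t ht).mul ((ho'.deriv_x t ht).sub (ho.deriv_x t ht)))
      (hgc.intervalIntegrable _ _), ho.init]
    ring
  have hi := (ho.continuous_integrand hR).intervalIntegrable (μ := MeasureTheory.volume) 0 1
  have hi' := (ho'.continuous_integrand hR).intervalIntegrable (μ := MeasureTheory.volume) 0 1
  rw [← hFTC, action, action, ← intervalIntegral.integral_sub hi' hi,
    ← intervalIntegral.integral_sub (hi'.sub hi) (hgc.intervalIntegrable _ _)]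
  have hbound : ∀ t ∈ Icc (0 : ℝ) 1,
      |k t (x' t, y' t) - y' t * b t (x' t, y' t) - (k t (x t, y t) - y t * b t (x t, y t)) - g t|
        ≤ 2 * L * (2 * Real.exp (2 * L)) ^ 2 * (x' 0 - x 0) ^ 2 := fun t ht => by
    have h1 := hR.taylor t (x t, y t) (x' t - x t, y' t - y t)
    have h2 := hR.lip_b t t (x' t, y' t) (x t, y t)
    have h3 := ho.dist_le hR ho' t ht
    have h4 : ((x t, y t) + (x' t - x t, y' t - y t) : ℝ × ℝ) = (x' t, y' t) := by
      ext <;> simp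
    rw [h4] at h1
    rw [sub_self, abs_zero, zero_add] at h2
    simp only at h1 h2
    set u := x' t - x t with hu
    set w := y' t - y t with hw
    have h5 : k t (x' t, y' t) - y' t * b t (x' t, y' t)
          - (k t (x t, y t) - y t * b t (x t, y t)) - g t
        = (k t (x' t, y' t) - k t (x t, y t) - a t (x t, y t) * u - b t (x t, y t) * w)
          - w * (b t (x' t, y' t) - b t (x t, y t)) := by
      simp only [hg, hu, hw]
      ring
    have h6 : |w * (b t (x' t, y' t) - b t (x t, y t))| ≤ |w| * (L * (|u| + |w|)) := by
      rw [abs_mul]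
      exact mul_le_mul_of_nonneg_left h2 (abs_nonneg _)
    have h7 : (|u| + |w|) ^ 2 ≤ (2 * Real.exp (2 * L)) ^ 2 * (x' 0 - x 0) ^ 2 := by
      rw [← sq_abs (x' 0 - x 0), ← mul_pow]
      exact pow_le_pow_left₀ (by positivity) h3 2
    have h8 : L * (u ^ 2 + w ^ 2) + |w| * (L * (|u| + |w|)) ≤ 2 * L * (|u| + |w|) ^ 2 := by
      rw [← sq_abs u, ← sq_abs w]
      have h9 : 0 ≤ L * (|u| * |w|) := by positivity
      have h10 : 0 ≤ L * |u| ^ 2 := by positivity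
      linarith
    rw [h5]
    refine ((abs_sub _ _).trans (add_le_add h1 h6)).trans (h8.trans ?_)
    rw [mul_assoc (2 * L)]
    exact mul_le_mul_of_nonneg_left h7 (by positivity)
  rw [← Real.norm_eq_abs]
  refine (intervalIntegral.norm_integral_le_of_norm_le_const (E := ℝ) fun t ht => ?_).trans
    (le_of_eq (by rw [sub_zero, abs_one, mul_one]))
  rw [uIoc_of_le zero_le_one] at ht
  exact hbound t (Ioc_subset_Icc_self ht)

/-- For a family of orbits starting on `y = 0` and indexed by the initial position, whose time-one
map translates `x`, the derivative of the action is the height `y(1)` of the end point. -/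
lemma hasDerivAt_action (hR : Regular k a b L) {x y : ℝ → ℝ → ℝ} {c : ℝ}
    (ho : ∀ s, IsOrbit a b (x s) (y s)) (h0 : ∀ s, x s 0 = s) (h1 : ∀ s, x s 1 = s + c) (s : ℝ) :
    HasDerivAt (fun s => action k b (x s) (y s)) (y s 1) s := by
  obtain ⟨C, hC⟩ := action_expansion hR
  rw [hasDerivAt_iff_isLittleO]
  refine Asymptotics.IsBigO.trans_isLittleO (g := fun r => (r - s) ^ 2) ?_ ?_
  · refine Asymptotics.IsBigO.of_bound C (Filter.Eventually.of_forall fun r => ?_)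
    have h2 := hC (ho s) (ho r)
    rw [h0, h0, h1, h1, add_sub_add_right_eq_sub] at h2
    rw [smul_eq_mul, mul_comm (r - s), Real.norm_eq_abs, Real.norm_eq_abs,
      abs_of_nonneg (sq_nonneg (r - s))]
    exact h2
  · simpa [← norm_pow] using (Asymptotics.isLittleO_pow_sub_sub s one_lt_two).norm_left

end ActionDerivative

/-! ### The Hofer length and the shear -/

section Extrema

variable {k a b : ℝ → ℝ × ℝ → ℝ} {L : ℝ}

lemma Regular.bddAbove (hR : Regular k a b L) (t : ℝ) : BddAbove (range (k t)) :=
  ⟨L, by rintro _ ⟨z, rfl⟩; exact (abs_le.1 (hR.bound_k t z)).2⟩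

lemma Regular.bddBelow (hR : Regular k a b L) (t : ℝ) : BddBelow (range (k t)) :=
  ⟨-L, by rintro _ ⟨z, rfl⟩; exact (abs_le.1 (hR.bound_k t z)).1⟩

lemma Regular.abs_sub_time_le (hR : Regular k a b L) (t t' : ℝ) (z : ℝ × ℝ) :
    |k t z - k t' z| ≤ L * |t - t'| := by
  simpa using hR.lip_k t t' z z

lemma Regular.lip_sSup (hR : Regular k a b L) (t t' : ℝ) :
    |sSup (range (k t)) - sSup (range (k t'))| ≤ L * |t - t'| := by
  have key : ∀ t t', sSup (range (k t)) - sSup (range (k t')) ≤ L * |t - t'| := fun t t' => by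
    rw [sub_le_iff_le_add]
    refine csSup_le (range_nonempty _) ?_
    rintro _ ⟨z, rfl⟩
    have h1 := (abs_le.1 (hR.abs_sub_time_le t t' z)).2
    have h2 := le_csSup (hR.bddAbove t') (mem_range_self z)
    linarith
  refine abs_sub_le_iff.2 ⟨key t t', ?_⟩
  rw [abs_sub_comm]
  exact key t' t

lemma Regular.lip_sInf (hR : Regular k a b L) (t t' : ℝ) :
    |sInf (range (k t)) - sInf (range (k t'))| ≤ L * |t - t'| := by
  have key : ∀ t t', sInf (range (k t)) - sInf (range (k t')) ≤ L * |t - t'| := fun t t' => by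
    rw [sub_le_comm]
    refine le_csInf (range_nonempty _) ?_
    rintro _ ⟨z, rfl⟩
    have h1 := (abs_le.1 (hR.abs_sub_time_le t t' z)).2
    have h2 := csInf_le (hR.bddBelow t) (mem_range_self z)
    linarith
  refine abs_sub_le_iff.2 ⟨key t t', ?_⟩
  rw [abs_sub_comm]
  exact key t' t

lemma Regular.continuous_of_lip (hR : Regular k a b L) {m : ℝ → ℝ}
    (hm : ∀ t t', |m t - m t'| ≤ L * |t - t'|) : Continuous m :=
  (LipschitzWith.of_dist_le_mul (K := L.toNNReal) fun t t' => by
    rw [Real.coe_toNNReal _ hR.nonneg]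
    exact hm t t').continuous

/-- Any difference of actions is at most the Hofer length. -/
lemma action_sub_le (hR : Regular k a b L) {x y : ℝ → ℝ → ℝ} {c : ℝ}
    (ho : ∀ s, IsOrbit a b (x s) (y s)) (h0 : ∀ s, x s 0 = s) (h1 : ∀ s, x s 1 = s + c)
    (s s' : ℝ) : action k b (x s) (y s) - action k b (x s') (y s')
      ≤ ∫ t in (0 : ℝ)..1, (sSup (range (k t)) - sInf (range (k t))) := by
  have hA : Continuous fun s => action k b (x s) (y s) :=
    continuous_iff_continuousAt.2 fun s => (hasDerivAt_action hR ho h0 h1 s).continuousAt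
  rw [intervalIntegral.integral_sub
    ((hR.continuous_of_lip hR.lip_sSup).intervalIntegrable _ _)
    ((hR.continuous_of_lip hR.lip_sInf).intervalIntegrable _ _)]
  exact sub_le_sub
    (action_le hR ho h0 h1 hA hR.lip_sSup
      (fun t z => le_csSup (hR.bddAbove t) (mem_range_self z)) s)
    (le_action hR ho h0 h1 hA hR.lip_sInf
      (fun t z => csInf_le (hR.bddBelow t) (mem_range_self z)) s')

end Extrema

lemma hamVF2_shear {f : ℝ → ℝ} (hf : Differentiable ℝ f) (z : ℝ × ℝ) :
    hamVF2 (fun p => f p.1) z = (0, deriv f z.1) := by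
  have h : HasFDerivAt (fun p : ℝ × ℝ => f p.1)
      (deriv f z.1 • ContinuousLinearMap.fst ℝ ℝ ℝ) z :=
    (hf z.1).hasDerivAt.comp_hasFDerivAt z hasFDerivAt_fst
  rw [hamVF2, h.fderiv]
  simp

lemma hamVF2_eq_fderiv {K : ℝ → ℝ × ℝ → ℝ}
    (hK : Differentiable ℝ fun q : ℝ × ℝ × ℝ => K q.1 q.2) (t : ℝ) (z : ℝ × ℝ) :
    hamVF2 (K t) z = (-fderiv ℝ (fun q : ℝ × ℝ × ℝ => K q.1 q.2) (t, z) (0, 0, 1),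
      fderiv ℝ (fun q : ℝ × ℝ × ℝ => K q.1 q.2) (t, z) (0, 1, 0)) := by
  have h : HasFDerivAt (K t) ((fderiv ℝ (fun q : ℝ × ℝ × ℝ => K q.1 q.2) (t, z)).comp
      (ContinuousLinearMap.inr ℝ ℝ (ℝ × ℝ))) z :=
    (hK (t, z)).hasFDerivAt.comp z (hasFDerivAt_prodMk_right t z)
  rw [hamVF2, h.fderiv]
  simp

/-- (Lemma 5.5 of the paper: unboundedness of Hofer's metric on the
torus.)  Let `f` be smooth, 1-periodic, with `f 0 = f' 0 = 0`, increasing on `[0,1/2]`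
with `f(1/2) = 1` and decreasing on `[1/2,1]`, and let `H(x,y) = f(x)`.  The Hamiltonian
flow of `H` is `φ_t(x,y) = (x, y + t f'(x))`, and for every `T > 0`, every ℤ²-periodic
Hamiltonian `K` on `ℝ²` whose isotopy ends at a lift `φ_T + c`, `c ∈ ℤ²`, of the time-`T`
map of `H` on the torus has Hofer length at least `T`. -/
theorem statement9 (f : ℝ → ℝ) (hfsm : ContDiff ℝ (⊤ : ℕ∞) f)
    (hper : ∀ x : ℝ, f (x + 1) = f x)
    (hf0 : f 0 = 0) (hf'0 : deriv f 0 = 0)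
    (hmono : MonotoneOn f (Icc (0:ℝ) (1/2)))
    (hhalf : f (1/2 : ℝ) = 1)
    (hanti : AntitoneOn f (Icc (1/2 : ℝ) 1)) :
    (∀ (z : ℝ × ℝ) (t : ℝ),
      HasDerivAt (fun s => ((z.1, z.2 + s * deriv f z.1) : ℝ × ℝ))
        (hamVF2 (fun p => f p.1) (z.1, z.2 + t * deriv f z.1)) t) ∧
    ∀ T > (0:ℝ), ∀ K : ℝ → ℝ × ℝ → ℝ,
      (ContDiff ℝ (⊤ : ℕ∞) fun q : ℝ × ℝ × ℝ => K q.1 q.2) →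
      (∀ (t : ℝ) (z : ℝ × ℝ) (k : ℤ × ℤ), K t (z.1 + k.1, z.2 + k.2) = K t z) →
      ∀ ψ : ℝ → ℝ × ℝ → ℝ × ℝ,
        (∀ z, ψ 0 z = z) →
        (∀ (z : ℝ × ℝ) (t : ℝ), HasDerivAt (fun s => ψ s z) (hamVF2 (K t) (ψ t z)) t) →
        ∀ c : ℤ × ℤ,
          (∀ z : ℝ × ℝ, ψ 1 z = (z.1 + c.1, z.2 + T * deriv f z.1 + c.2)) →
          T ≤ ∫ t in (0:ℝ)..1, (sSup (Set.range (K t)) - sInf (Set.range (K t))) := by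
  have hfd : Differentiable ℝ f := hfsm.differentiable (by simp)
  refine ⟨fun z t => ?_, fun T _ K hK hKper ψ hψ0 hψ c hψ1 => ?_⟩
  · rw [hamVF2_shear hfd]
    have h : HasDerivAt (fun s : ℝ => z.2 + s * deriv f z.1) (deriv f z.1) t := by
      simpa using ((hasDerivAt_id t).mul_const (deriv f z.1)).const_add z.2
    exact (hasDerivAt_const t z.1).prodMk h
  have hKd : Differentiable ℝ fun q : ℝ × ℝ × ℝ => K q.1 q.2 := hK.differentiable (by simp)
  obtain ⟨L, hR⟩ := exists_regular hK (fun q m n => by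
    simpa [Prod.add_def] using hKper q.1 q.2 (m, n))
  have ho : ∀ s, IsOrbit
      (fun t z => fderiv ℝ (fun q : ℝ × ℝ × ℝ => K q.1 q.2) (clamp t, z) (0, 1, 0))
      (fun t z => fderiv ℝ (fun q : ℝ × ℝ × ℝ => K q.1 q.2) (clamp t, z) (0, 0, 1))
      (fun t => (ψ t (s, 0)).1) (fun t => (ψ t (s, 0)).2) := fun s => by
    have hc : Continuous fun t => ψ t (s, 0) :=
      continuous_iff_continuousAt.2 fun t => (hψ (s, 0) t).continuousAt
    have hd := fun t => hψ (s, 0) t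
    simp only [hamVF2_eq_fderiv hKd] at hd
    refine ⟨continuous_fst.comp hc, continuous_snd.comp hc, by simp [hψ0], fun t ht => ?_,
      fun t ht => ?_⟩
    · rw [clamp_of_mem ht]
      exact (hd t).fst
    · rw [clamp_of_mem ht]
      exact (hd t).snd
  have h0 : ∀ s : ℝ, (ψ 0 (s, 0)).1 = s := fun s => by rw [hψ0]
  have h1 : ∀ s : ℝ, (ψ 1 (s, 0)).1 = s + c.1 := fun s => by rw [hψ1]
  have hle := action_sub_le hR ho h0 h1
  have hder := hasDerivAt_action hR ho h0 h1
  set A : ℝ → ℝ := fun s => action (fun t z => K (clamp t) z)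
    (fun t z => fderiv ℝ (fun q : ℝ × ℝ × ℝ => K q.1 q.2) (clamp t, z) (0, 0, 1))
    (fun t => (ψ t (s, 0)).1) (fun t => (ψ t (s, 0)).2) with hA
  have hInt : ∫ t in (0 : ℝ)..1, (sSup (range (K (clamp t))) - sInf (range (K (clamp t))))
      = ∫ t in (0 : ℝ)..1, (sSup (range (K t)) - sInf (range (K t))) :=
    intervalIntegral.integral_congr fun t ht => by
      rw [uIcc_of_le zero_le_one] at ht
      simp only [clamp_of_mem ht]
  have hle' : ∀ s s', A s - A s' ≤ ∫ t in (0 : ℝ)..1, (sSup (range (K t)) - sInf (range (K t))) :=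
    fun s s' => (hle s s').trans_eq hInt
  have hconst : ∀ s s', A s - (T * f s + c.2 * s) = A s' - (T * f s' + c.2 * s') := by
    have hd : ∀ s, HasDerivAt (fun s => A s - (T * f s + c.2 * s)) 0 s := fun s => by
      have h2 := (hder s).sub (((hfd s).hasDerivAt.const_mul T).add
        ((hasDerivAt_id s).const_mul (c.2 : ℝ)))
      have h3 : (ψ 1 (s, 0)).2 - (T * deriv f s + c.2 * 1) = 0 := by
        rw [hψ1]
        ring
      rw [h3] at h2
      exact h2
    exact is_const_of_deriv_eq_zero (fun s => (hd s).differentiableAt) fun s => (hd s).deriv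
  have hneg : f (-(1 / 2)) = 1 := by
    rw [← hper, show -(1 / 2) + 1 = (1 / 2 : ℝ) by norm_num, hhalf]
  have e1 := hconst (1 / 2) 0
  have e2 := hconst (-(1 / 2)) 0
  rw [hhalf, hf0] at e1
  rw [hneg, hf0] at e2
  -- the two values `±1/2` cancel the unknown translation `c.2`
  have i1 := hle' (1 / 2) 0
  have i2 := hle' (-(1 / 2)) 0
  linarith
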